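/- arXiv:1112.1815 — 7 statements merged into one kernel-verified Lean document; each statement's English description precedes it below -/
import Mathlib

section
/- Let g : (0,∞) → ℝ be nonincreasing. Suppose that for every b > 0 the limit L(b) := lim_{n→∞, n ∈ ℕ} g(n·b)/√n exists and is finite. Then L(b) = L(1)·√b for every b > 0 (in particular, L has the form L(b) = −K√b for the constant K = −L(1) ≥ 0). -/
open MeasureTheory Set Filter

/-!
Monotonicity upgrades convergence of `g n / n ^ p` along the integers to convergence of
`g x / x ^ p` as the real variable `x` tends to infinity: `g x` lies between `g ⌈x⌉` and `g ⌊x⌋`,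
and `⌊x⌋ / x` and `⌈x⌉ / x` tend to `1`. Substituting `x = n * b` then gives
`g (n * b) / n ^ p = b ^ p * (g x / x ^ p)`, so the limit at `1` determines the limit at every `b`.
-/

open scoped Topology

section RpowScaling

variable {g : ℝ → ℝ} {a l p : ℝ}

lemma tendsto_comp_div_rpow {ι κ : Type*} {F : Filter ι} {G : Filter κ} {f v : κ → ℝ}
    {k : ι → κ} {u : ι → ℝ} {c : ℝ} (hf : Tendsto (fun j => f j / v j ^ p) G (𝓝 l))
    (hv : ∀ᶠ j in G, 0 < v j) (hu : ∀ᶠ i in F, 0 ≤ u i) (hk : Tendsto k F G)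
    (hratio : Tendsto (fun i => v (k i) / u i) F (𝓝 c)) (hc : c ≠ 0 ∨ 0 ≤ p) :
    Tendsto (fun i => f (k i) / u i ^ p) F (𝓝 (l * c ^ p)) := by
  refine ((hf.comp hk).mul (hratio.rpow_const hc)).congr' ?_
  filter_upwards [hk.eventually hv, hu] with i hvi hui
  rw [Function.comp_apply, Real.div_rpow hvi.le hui,
    div_mul_div_cancel₀ (Real.rpow_pos_of_pos hvi p).ne']

lemma tendsto_comp_div_rpow_of_div_tendsto_one {s : ℕ → ℝ} {k : ℝ → ℕ}
    (hs : Tendsto (fun n : ℕ => s n / (n : ℝ) ^ p) atTop (𝓝 l)) (hk : Tendsto k atTop atTop)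
    (hratio : Tendsto (fun x => (k x : ℝ) / x) atTop (𝓝 1)) :
    Tendsto (fun x => s (k x) / x ^ p) atTop (𝓝 l) := by
  have hpos : ∀ᶠ n : ℕ in atTop, (0 : ℝ) < n :=
    tendsto_natCast_atTop_atTop.eventually_gt_atTop 0
  simpa only [Real.one_rpow, mul_one] using
    tendsto_comp_div_rpow hs hpos (eventually_ge_atTop 0) hk hratio (.inl one_ne_zero)

lemma tendsto_div_rpow_of_antitoneOn_of_natCast (hanti : AntitoneOn g (Ioi a))
    (hg : Tendsto (fun n : ℕ => g n / (n : ℝ) ^ p) atTop (𝓝 l)) :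
    Tendsto (fun x => g x / x ^ p) atTop (𝓝 l) := by
  have hceil : Tendsto (fun x : ℝ => g ⌈x⌉₊ / x ^ p) atTop (𝓝 l) :=
    tendsto_comp_div_rpow_of_div_tendsto_one hg tendsto_nat_ceil_atTop tendsto_nat_ceil_div_atTop
  have hfloor : Tendsto (fun x : ℝ => g ⌊x⌋₊ / x ^ p) atTop (𝓝 l) :=
    tendsto_comp_div_rpow_of_div_tendsto_one hg tendsto_nat_floor_atTop tendsto_nat_floor_div_atTop
  have hfloor_gt : ∀ᶠ x : ℝ in atTop, a < ⌊x⌋₊ :=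
    (tendsto_natCast_atTop_atTop.comp tendsto_nat_floor_atTop).eventually_gt_atTop a
  refine tendsto_of_tendsto_of_tendsto_of_le_of_le' hceil hfloor ?_ ?_
  · filter_upwards [eventually_gt_atTop a, eventually_ge_atTop 0] with x hax hx
    gcongr
    exact hanti hax (hax.trans_le (Nat.le_ceil x)) (Nat.le_ceil x)
  · filter_upwards [hfloor_gt, eventually_ge_atTop 0] with x hax hx
    gcongr
    exact hanti hax (hax.trans_le (Nat.floor_le hx)) (Nat.floor_le hx)

lemma tendsto_natCast_mul_div_rpow {b : ℝ} (hb : 0 < b)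
    (hg : Tendsto (fun x => g x / x ^ p) atTop (𝓝 l)) :
    Tendsto (fun n : ℕ => g (n * b) / (n : ℝ) ^ p) atTop (𝓝 (l * b ^ p)) := by
  have hpos : ∀ᶠ n : ℕ in atTop, (0 : ℝ) < n :=
    tendsto_natCast_atTop_atTop.eventually_gt_atTop 0
  have hratio : Tendsto (fun n : ℕ => n * b / (n : ℝ)) atTop (𝓝 b) := by
    refine tendsto_const_nhds.congr' ?_
    filter_upwards [hpos] with n hn
    exact (mul_div_cancel_left₀ b hn.ne').symm
  exact tendsto_comp_div_rpow (v := id) hg (eventually_gt_atTop 0)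
    (.of_forall fun n => n.cast_nonneg) (tendsto_natCast_atTop_atTop.atTop_mul_const hb) hratio
    (.inl hb.ne')

lemma nonpos_of_antitoneOn_of_tendsto_div_rpow (hp : 0 < p) (hanti : AntitoneOn g (Ioi a))
    (hg : Tendsto (fun x => g x / x ^ p) atTop (𝓝 l)) : l ≤ 0 := by
  have hbound : Tendsto (fun x : ℝ => g (a + 1) / x ^ p) atTop (𝓝 0) :=
    (tendsto_rpow_atTop hp).const_div_atTop _
  refine le_of_tendsto_of_tendsto hg hbound ?_
  filter_upwards [eventually_ge_atTop (a + 1), eventually_ge_atTop 0] with x hax hx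
  have ha : a < a + 1 := lt_add_one a
  gcongr
  exact hanti ha (ha.trans_le hax) hax

theorem busy_period_scaling_form_general (hp : 0 < p) (hanti : AntitoneOn g (Ioi a))
    (hg : Tendsto (fun n : ℕ => g n / (n : ℝ) ^ p) atTop (𝓝 l)) :
    (∀ b : ℝ, 0 < b →
      Tendsto (fun n : ℕ => g (n * b) / (n : ℝ) ^ p) atTop (𝓝 (l * b ^ p))) ∧ l ≤ 0 :=
  have hlim := tendsto_div_rpow_of_antitoneOn_of_natCast hanti hg
  ⟨fun _ hb => tendsto_natCast_mul_div_rpow hb hlim,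
    nonpos_of_antitoneOn_of_tendsto_div_rpow hp hanti hlim⟩

end RpowScaling

/-- If `g` is nonincreasing on `(0, ∞)` and for every `b > 0` the limit
`L b = lim_{n → ∞} g (n b) / √n` exists, then `L b = L 1 · √b` for all `b > 0`;
in particular `L` has the form `L b = -K √b` with `K = -L 1 ≥ 0`. -/
theorem busy_period_scaling_form
    (g L : ℝ → ℝ)
    (hg : ∀ x y : ℝ, 0 < x → x ≤ y → g y ≤ g x)
    (hL : ∀ b : ℝ, 0 < b →
      Tendsto (fun n : ℕ => g (n * b) / Real.sqrt n) atTop (nhds (L b))) :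
    (∀ b : ℝ, 0 < b → L b = L 1 * Real.sqrt b) ∧ 0 ≤ -(L 1) := by
  simp only [Real.sqrt_eq_rpow] at hL ⊢
  obtain ⟨hlim, hnonpos⟩ := busy_period_scaling_form_general one_half_pos
    (fun x hx y _ hxy => hg x y hx hxy) (by simpa only [mul_one] using hL 1 one_pos)
  exact ⟨fun b hb => tendsto_nhds_unique (hL b hb) (hlim b hb), neg_nonneg.2 hnonpos⟩
end

section
/- Assume the setup below. Then ∫₀^{λ*} Ξ(s) ds = 0, equivalently ∫₀¹ Ξ(λ*·s) ds = 0; moreover, λ* is the unique positive solution of this equation: if λ ∈ (0, λ*] satisfies ∫₀^{λ} Ξ(s) ds = 0 then λ = λ*. -/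
open MeasureTheory Set Filter

/-!
Let `G r = r * Ξ r - I (Ξ r)` be the Legendre transform of `I`, the supremum of `r * x - I x` being
attained at `x = Ξ r` because `I' (Ξ r) = r`. The tangent line inequality for `I` at `Ξ s`, read as
an inequality in the slopes, says that `Ξ` is a subgradient of `G`; hence `Ξ` is monotone and
`∫ s in 0..r, Ξ s = G r - G 0`. Here `G 0 = -I (-δ) = 0`, while `G λ* = 0` says that the tangent to
`I` at `x*` passes through the origin. Since distinct slopes are attained at distinct points, `Ξ` is
strictly increasing, so that its integral from `0` first decreases, then increases, and vanishes at
most once after `0`.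
-/

theorem tangent_line_le_of_convexOn {S : Set ℝ} {f : ℝ → ℝ} {f' x y : ℝ} (hf : ConvexOn ℝ S f)
    (hx : x ∈ S) (hy : y ∈ S) (hf' : HasDerivAt f f' x) : f x + f' * (y - x) ≤ f y := by
  rcases lt_trichotomy x y with hxy | rfl | hyx
  · have hslope := hf.le_slope_of_hasDerivAt hx hy hxy hf'
    rw [slope_def_field, le_div_iff₀ (sub_pos.2 hxy)] at hslope
    linarith
  · simp
  · have hslope := hf.slope_le_of_hasDerivAt hy hx hyx hf'
    rw [slope_def_field, div_le_iff₀ (sub_pos.2 hyx)] at hslope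
    linarith

/-- `g` selects a subgradient of `f` at each point of `s`, where only points of `s` are tested in
the subgradient inequality. -/
def IsSubgradientOn (f g : ℝ → ℝ) (s : Set ℝ) : Prop :=
  ∀ x ∈ s, ∀ y ∈ s, f x + g x * (y - x) ≤ f y

namespace IsSubgradientOn

variable {f g : ℝ → ℝ} {s : Set ℝ} {a b x : ℝ}

theorem monotoneOn (h : IsSubgradientOn f g s) : MonotoneOn g s := by
  intro x hx y hy hxy
  rcases hxy.eq_or_lt with rfl | hlt
  · rfl
  · have hmul : g x * (y - x) ≤ g y * (y - x) := by linarith [h x hx y hy, h y hy x hx]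
    exact le_of_mul_le_mul_right hmul (sub_pos.2 hlt)

theorem hasDerivWithinAt (h : IsSubgradientOn f g s) (hx : x ∈ s)
    (hg : ContinuousWithinAt g s x) : HasDerivWithinAt f (g x) s x := by
  rw [hasDerivWithinAt_iff_isLittleO, Asymptotics.isLittleO_iff]
  intro c hc
  filter_upwards [self_mem_nhdsWithin, Metric.continuousWithinAt_iff'.1 hg c hc] with y hy hgy
  have hlower := h x hx y hy
  have hupper := h y hy x hx
  rw [Real.dist_eq] at hgy
  rw [smul_eq_mul, Real.norm_eq_abs, Real.norm_eq_abs]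
  calc |f y - f x - (y - x) * g x|
      = f y - f x - (y - x) * g x := abs_of_nonneg (by linarith)
    _ ≤ (g y - g x) * (y - x) := by linarith
    _ ≤ |g y - g x| * |y - x| := (le_abs_self _).trans_eq (abs_mul _ _)
    _ ≤ c * |y - x| := by gcongr

theorem lipschitzOnWith_Icc (h : IsSubgradientOn f g (Icc a b)) :
    LipschitzOnWith (max ‖g a‖₊ ‖g b‖₊) f (Icc a b) := by
  refine LipschitzOnWith.of_le_add_mul _ fun x hx y hy ↦ ?_
  have hab : a ≤ b := hx.1.trans hx.2
  have hbound : |g x| ≤ max |g a| |g b| :=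
    abs_le_max_abs_abs (h.monotoneOn (left_mem_Icc.2 hab) hx hx.1)
      (h.monotoneOn hx (right_mem_Icc.2 hab) hx.2)
  calc f x ≤ f y + g x * (x - y) := by linarith [h x hx y hy]
    _ ≤ f y + |g x| * |x - y| := by grw [le_abs_self (g x * (x - y)), abs_mul]
    _ ≤ f y + max |g a| |g b| * |x - y| := by gcongr

theorem integral_eq_sub (h : IsSubgradientOn f g (Icc a b)) (hab : a ≤ b) :
    ∫ x in a..b, g x = f b - f a := by
  have hint : IntervalIntegrable g volume a b :=
    MonotoneOn.intervalIntegrable (by simpa only [uIcc_of_le hab] using h.monotoneOn)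
  refine integral_eq_of_hasDerivAt_off_countable_of_le f g hab
    h.monotoneOn.countable_not_continuousWithinAt h.lipschitzOnWith_Icc.continuousOn ?_ hint
  rintro x ⟨hx, hcont⟩
  have hx' : x ∈ Icc a b := Ioo_subset_Icc_self hx
  exact (h.hasDerivWithinAt hx' (by_contra fun hnot ↦ hcont ⟨hx', hnot⟩)).hasDerivAt
    (Icc_mem_nhds hx.1 hx.2)

end IsSubgradientOn

/-- The Legendre transform `r ↦ sup x, r * x - I x` of `I`, with `Ξ r` standing for the point where
the supremum is attained; this is the case when `I` is convex with slope `r` at `Ξ r`. -/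
def legendreAlong (I Ξ : ℝ → ℝ) (r : ℝ) : ℝ :=
  r * Ξ r - I (Ξ r)

section InverseDerivative

variable {S T : Set ℝ} {I Ξ : ℝ → ℝ}

theorem isSubgradientOn_legendreAlong (hI : ConvexOn ℝ S I) (hΞS : MapsTo Ξ T S)
    (hΞ : ∀ r ∈ T, HasDerivAt I r (Ξ r)) : IsSubgradientOn (legendreAlong I Ξ) Ξ T := by
  intro r hr s hs
  have htangent := tangent_line_le_of_convexOn hI (hΞS hs) (hΞS hr) (hΞ s hs)
  unfold legendreAlong
  linarith

theorem strictMonoOn_of_hasDerivAt_of_convexOn (hI : ConvexOn ℝ S I) (hΞS : MapsTo Ξ T S)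
    (hΞ : ∀ r ∈ T, HasDerivAt I r (Ξ r)) : StrictMonoOn Ξ T := by
  have hinj : InjOn Ξ T := fun r hr s hs hrs ↦ (hΞ r hr).unique (hrs ▸ hΞ s hs)
  exact (isSubgradientOn_legendreAlong hI hΞS hΞ).monotoneOn.strictMonoOn_of_injOn hinj

end InverseDerivative

theorem integral_neg_of_strictMonoOn_of_integral_eq_zero {g : ℝ → ℝ} {a b c : ℝ}
    (hg : StrictMonoOn g (Icc a b)) (hzero : ∫ x in a..b, g x = 0) (hac : a < c) (hcb : c < b) :
    ∫ x in a..c, g x < 0 := by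
  have hc : c ∈ Icc a b := ⟨hac.le, hcb.le⟩
  have hint_left : IntervalIntegrable g volume a c := by
    refine (hg.monotoneOn.mono ?_).intervalIntegrable
    rw [uIcc_of_le hac.le]
    exact Icc_subset_Icc_right hcb.le
  have hint_right : IntervalIntegrable g volume c b := by
    refine (hg.monotoneOn.mono ?_).intervalIntegrable
    rw [uIcc_of_le hcb.le]
    exact Icc_subset_Icc_left hac.le
  rcases le_or_gt (g c) 0 with hgc | hgc
  · have hneg : ∀ x ∈ Ioo a c, 0 < -g x := fun x hx ↦
      neg_pos.2 ((hg ⟨hx.1.le, (hx.2.trans hcb).le⟩ hc hx.2).trans_le hgc)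
    have hpos : 0 < ∫ x in a..c, -g x :=
      intervalIntegral.intervalIntegral_pos_of_pos_on hint_left.neg hneg hac
    simpa only [intervalIntegral.integral_neg, neg_pos] using hpos
  · have hpos : 0 < ∫ x in c..b, g x :=
      intervalIntegral.intervalIntegral_pos_of_pos_on hint_right
        (fun x hx ↦ hgc.trans (hg hc ⟨(hac.trans hx.1).le, hx.2.le⟩ hx.1)) hcb
    linarith [intervalIntegral.integral_add_adjacent_intervals hint_left hint_right]

theorem lambda_star_integral_characterization_general {S : Set ℝ} {I Ξ : ℝ → ℝ} {lstar : ℝ}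
    (hlstar : 0 < lstar) (hI : ConvexOn ℝ S I) (hΞS : MapsTo Ξ (Icc 0 lstar) S)
    (hΞ : ∀ r ∈ Icc 0 lstar, HasDerivAt I r (Ξ r))
    (hzero : I (Ξ 0) = 0) (htangent : I (Ξ lstar) = lstar * Ξ lstar) :
    (∫ s in (0 : ℝ)..lstar, Ξ s) = 0 ∧
    (∫ s in (0 : ℝ)..1, Ξ (lstar * s)) = 0 ∧
    (∀ lam : ℝ, 0 < lam → lam ≤ lstar → (∫ s in (0 : ℝ)..lam, Ξ s) = 0 → lam = lstar) := by
  have hintegral : ∫ s in (0 : ℝ)..lstar, Ξ s = 0 := by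
    rw [(isSubgradientOn_legendreAlong hI hΞS hΞ).integral_eq_sub hlstar.le]
    simp [legendreAlong, hzero, htangent]
  refine ⟨hintegral, ?_, fun lam hpos hle hlam ↦ hle.eq_of_not_lt fun hlt ↦ ?_⟩
  · simp [intervalIntegral.integral_comp_mul_left Ξ hlstar.ne', hintegral]
  · exact (integral_neg_of_strictMonoOn_of_integral_eq_zero
      (strictMonoOn_of_hasDerivAt_of_convexOn hI hΞS hΞ) hintegral hpos hlt).ne hlam

/-- `λ*` is the unique positive solution of `∫₀^λ Ξ(s) ds = 0`. -/
theorem lambda_star_integral_characterization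
    (δ xstar lstar : ℝ) (I Ξ : ℝ → ℝ)
    (hδ : 0 < δ)
    (hconv : StrictConvexOn ℝ Set.univ I)
    (hC1 : ContDiff ℝ 1 I)
    (hImin : I (-δ) = 0)
    (hIpos : ∀ x : ℝ, x ≠ -δ → 0 < I x)
    (hderivδ : deriv I (-δ) = 0)
    (hxpos : 0 < xstar)
    (hxmin : ∀ x : ℝ, 0 < x → I xstar / xstar ≤ I x / x)
    (hlamdef : lstar = deriv I xstar)
    (hlamalt : lstar = I xstar / xstar)
    (hlampos : 0 < lstar)
    (hΞinvL : ∀ x ∈ Set.Icc (-δ) xstar, Ξ (deriv I x) = x)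
    (hΞinvR : ∀ r ∈ Set.Icc (0:ℝ) lstar, deriv I (Ξ r) = r)
    (hΞmaps : ∀ r ∈ Set.Icc (0:ℝ) lstar, Ξ r ∈ Set.Icc (-δ) xstar)
    (hΞcont : ContinuousOn Ξ (Set.Icc 0 lstar))
    (hΞmono : StrictMonoOn Ξ (Set.Icc 0 lstar))
    (hΞzero : Ξ 0 = -δ)
    (hΞlstar : Ξ lstar = xstar) :
    (∫ s in (0:ℝ)..lstar, Ξ s) = 0 ∧
    (∫ s in (0:ℝ)..1, Ξ (lstar * s)) = 0 ∧
    (∀ lam : ℝ, 0 < lam → lam ≤ lstar → (∫ s in (0:ℝ)..lam, Ξ s) = 0 → lam = lstar) :=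
  lambda_star_integral_characterization_general hlampos hconv.convexOn (mapsTo_univ _ _)
    (fun r hr ↦ (hC1.differentiable one_ne_zero _).hasDerivAt.congr_deriv (hΞinvR r hr))
    (by rw [hΞzero, hImin]) (by rw [hΞlstar, hlamalt, div_mul_cancel₀ _ hxpos.ne'])
end

section
/- Assume the setup below, and additionally assume the symmetry Λ(θ) = Λ(λ* − θ) for all θ ∈ [0, λ*]. Then: (i) ψ*(t) = ψ*(1−t) for all t ∈ [0, 1]; (ii) x* = δ; (iii) λ* = I'(δ) = I(δ)/δ; and (iv) λ* = 2·I'(0). -/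
open MeasureTheory Set Filter

section Subgradient

variable {f g Ξ : ℝ → ℝ} {s t : Set ℝ}

theorem isSubgradientOn_deriv_of_convexOn (hf : ConvexOn ℝ s f)
    (hdiff : ∀ x ∈ s, DifferentiableAt ℝ f x) : IsSubgradientOn f (deriv f) s := by
  intro x hx y hy
  rcases lt_trichotomy x y with hxy | rfl | hyx
  · have hslope := hf.deriv_le_slope hx hy hxy (hdiff x hx)
    rw [slope_def_field, le_div_iff₀ (sub_pos.2 hxy)] at hslope
    linarith
  · simp
  · have hslope := hf.slope_le_deriv hy hx hyx (hdiff x hx)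
    rw [slope_def_field, div_le_iff₀ (sub_pos.2 hyx)] at hslope
    linarith

theorem IsSubgradientOn.congr {f' : ℝ → ℝ} (h : IsSubgradientOn f g s) (hff' : EqOn f' f s) :
    IsSubgradientOn f' g s := by
  intro x hx y hy
  rw [hff' hx, hff' hy]
  exact h x hx y hy

theorem IsSubgradientOn.legendre (h : IsSubgradientOn f g s) (hmaps : MapsTo Ξ t s)
    (hinv : RightInvOn Ξ g t) : IsSubgradientOn (fun θ ↦ θ * Ξ θ - f (Ξ θ)) Ξ t := by
  intro θ hθ η hη
  have htangent := h (Ξ η) (hmaps hη) (Ξ θ) (hmaps hθ)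
  rw [hinv hη] at htangent
  linarith

theorem IsSubgradientOn.abs_sub_sub_le {x y : ℝ} (h : IsSubgradientOn f g s) (hx : x ∈ s)
    (hy : y ∈ s) : |f y - f x - (y - x) * g x| ≤ |g y - g x| * |y - x| := by
  have hxy := h x hx y hy
  have hyx := h y hy x hx
  calc |f y - f x - (y - x) * g x| = f y - f x - (y - x) * g x := abs_of_nonneg (by linarith)
    _ ≤ (g y - g x) * (y - x) := by linarith
    _ ≤ |(g y - g x) * (y - x)| := le_abs_self _
    _ = |g y - g x| * |y - x| := abs_mul _ _

theorem IsSubgradientOn.hasDerivWithinAt_s6 {x : ℝ} (h : IsSubgradientOn f g s) (hx : x ∈ s)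
    (hg : ContinuousWithinAt g s x) : HasDerivWithinAt f (g x) s x := by
  refine .of_isLittleO (Asymptotics.isLittleO_iff.2 fun ε hε ↦ ?_)
  have hclose : ∀ᶠ y in nhdsWithin x s, |g y - g x| < ε := hg (Metric.ball_mem_nhds _ hε)
  filter_upwards [hclose, self_mem_nhdsWithin] with y hyε hy
  exact (h.abs_sub_sub_le hx hy).trans (mul_le_mul_of_nonneg_right hyε.le (abs_nonneg _))

end Subgradient

section Reflection

variable {E : Type*} [NormedAddCommGroup E] [NormedSpace ℝ E] {a b c : ℝ}

theorem const_sub_mem_Icc_zero {x : ℝ} (hx : x ∈ Icc 0 c) : c - x ∈ Icc 0 c :=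
  ⟨sub_nonneg.2 hx.2, sub_le_self c hx.1⟩

theorem deriv_const_sub_eq_neg_of_symm {f f' : ℝ → E} {s : Set ℝ} (hs : UniqueDiffOn ℝ s)
    (hmaps : MapsTo (c - ·) s s) (hf : ∀ x ∈ s, HasDerivWithinAt f (f' x) s x)
    (hsymm : ∀ x ∈ s, f x = f (c - x)) {x : ℝ} (hx : x ∈ s) : f' (c - x) = -f' x := by
  have hreflect : HasDerivWithinAt f (-f' (c - x)) s x := by
    have hcomp := (hf (c - x) (hmaps hx)).scomp x ((hasDerivWithinAt_id x s).const_sub c) hmaps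
    rw [neg_one_smul] at hcomp
    exact hcomp.congr_of_mem hsymm hx
  rw [(hs x hx).eq_deriv s (hf x hx) hreflect, neg_neg]

theorem intervalIntegral_eq_zero_of_antisymm {h : ℝ → E}
    (hanti : ∀ s ∈ uIcc a b, h (a + b - s) = -h s) : ∫ s in a..b, h s = 0 := by
  have hreflect := intervalIntegral.integral_comp_sub_left (a := a) (b := b) h (a + b)
  rw [intervalIntegral.integral_congr hanti, intervalIntegral.integral_neg, add_sub_cancel_right,
    add_sub_cancel_left] at hreflect
  have : IsAddTorsionFree E := .of_isTorsionFree ℝ E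
  exact self_eq_neg.1 hreflect.symm

theorem intervalIntegral_eq_of_antisymm {h : ℝ → E} (hint : IntervalIntegrable h volume 0 c)
    (hanti : ∀ s ∈ Icc 0 c, h (c - s) = -h s) {t : ℝ} (ht : t ∈ Icc 0 c) :
    ∫ s in 0..t, h s = ∫ s in 0..(c - t), h s := by
  have ht' : c - t ∈ Icc 0 c := const_sub_mem_Icc_zero ht
  have hint_to {u : ℝ} (hu : u ∈ Icc 0 c) : IntervalIntegrable h volume 0 u :=
    hint.mono_set (uIcc_subset_uIcc_left (Icc_subset_uIcc hu))
  have hmiddle : ∫ s in (c - t)..t, h s = 0 := by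
    refine intervalIntegral_eq_zero_of_antisymm fun s hs ↦ ?_
    rw [sub_add_cancel]
    exact hanti s (uIcc_subset_Icc ht' ht hs)
  rw [← sub_eq_zero, intervalIntegral.integral_interval_sub_left (hint_to ht) (hint_to ht'),
    hmiddle]

theorem intervalIntegral_comp_mul_one_sub_eq_of_antisymm {φ : ℝ → E} (hc : 0 ≤ c)
    (hcont : ContinuousOn φ (Icc 0 c)) (hanti : ∀ θ ∈ Icc 0 c, φ (c - θ) = -φ θ)
    {t : ℝ} (ht : t ∈ Icc (0 : ℝ) 1) :
    ∫ s in 0..t, φ (c * (1 - s)) = ∫ s in 0..(1 - t), φ (c * (1 - s)) := by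
  have hmaps : MapsTo (fun s ↦ c * (1 - s)) (Icc 0 1) (Icc 0 c) := fun s hs ↦
    ⟨mul_nonneg hc (sub_nonneg.2 hs.2), mul_le_of_le_one_right hc (sub_le_self 1 hs.1)⟩
  refine intervalIntegral_eq_of_antisymm ?_ (fun s hs ↦ ?_) ht
  · exact (hcont.comp (by fun_prop) hmaps).intervalIntegrable_of_Icc zero_le_one
  · rw [← hanti _ (hmaps hs)]
    ring_nf

end Reflection

theorem rightInverse_deriv_const_sub_eq_neg_of_legendre_symm {l : ℝ} {I Ξ Λ : ℝ → ℝ} {S : Set ℝ}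
    (hconv : ConvexOn ℝ S I) (hdiff : ∀ x ∈ S, DifferentiableAt ℝ I x) (hl : 0 < l)
    (hΞmaps : MapsTo Ξ (Icc 0 l) S) (hΞinv : RightInvOn Ξ (deriv I) (Icc 0 l))
    (hΞcont : ContinuousOn Ξ (Icc 0 l)) (hΛ : ∀ θ ∈ Icc 0 l, Λ θ = θ * Ξ θ - I (Ξ θ))
    (hsymm : ∀ θ ∈ Icc 0 l, Λ θ = Λ (l - θ)) :
    ∀ θ ∈ Icc 0 l, Ξ (l - θ) = -Ξ θ := by
  have hsubgradient : IsSubgradientOn Λ Ξ (Icc 0 l) :=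
    ((isSubgradientOn_deriv_of_convexOn hconv hdiff).legendre hΞmaps hΞinv).congr hΛ
  have hderiv (θ : ℝ) (hθ : θ ∈ Icc 0 l) : HasDerivWithinAt Λ (Ξ θ) (Icc 0 l) θ :=
    hsubgradient.hasDerivWithinAt_s6 hθ (hΞcont θ hθ)
  exact fun θ hθ ↦ deriv_const_sub_eq_neg_of_symm (uniqueDiffOn_Icc hl)
    (fun _ ↦ const_sub_mem_Icc_zero) hderiv hsymm hθ

theorem symmetric_scgf_consequences_general {δ xstar lstar : ℝ} {I Ξ ψ Λ : ℝ → ℝ} {S : Set ℝ}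
    (hconv : ConvexOn ℝ S I) (hdiff : ∀ x ∈ S, DifferentiableAt ℝ I x) (hImin : I (-δ) = 0)
    (hlampos : 0 < lstar) (hΞmaps : MapsTo Ξ (Icc 0 lstar) S)
    (hΞinv : RightInvOn Ξ (deriv I) (Icc 0 lstar)) (hΞcont : ContinuousOn Ξ (Icc 0 lstar))
    (hΞzero : Ξ 0 = -δ) (hΞlstar : Ξ lstar = xstar)
    (hψ : ∀ t ∈ Icc (0 : ℝ) 1, ψ t = ∫ s in (0 : ℝ)..t, Ξ (lstar * (1 - s)))
    (hΛ : ∀ θ ∈ Icc 0 lstar, Λ θ = θ * Ξ θ - I (Ξ θ))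
    (hsym : ∀ θ ∈ Icc 0 lstar, Λ θ = Λ (lstar - θ)) :
    (∀ t ∈ Icc (0 : ℝ) 1, ψ t = ψ (1 - t)) ∧
    xstar = δ ∧
    lstar = deriv I δ ∧
    lstar = I δ / δ ∧
    lstar = 2 * deriv I 0 := by
  have hzero : 0 ∈ Icc 0 lstar := left_mem_Icc.2 hlampos.le
  have hlast : lstar ∈ Icc 0 lstar := right_mem_Icc.2 hlampos.le
  have hhalf : lstar / 2 ∈ Icc 0 lstar := ⟨(half_pos hlampos).le, half_le_self hlampos.le⟩
  have hanti := rightInverse_deriv_const_sub_eq_neg_of_legendre_symm hconv hdiff hlampos hΞmaps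
    hΞinv hΞcont hΛ hsym
  obtain rfl : xstar = δ := by simpa [hΞzero, hΞlstar] using hanti 0 hzero
  have hx_ne : xstar ≠ 0 := by
    rintro rfl
    exact hlampos.ne (hΞinv.injOn hzero hlast (by simp [hΞzero, hΞlstar]))
  have hIx : lstar * xstar = I xstar := by
    simpa [hΛ 0 hzero, hΛ lstar hlast, hΞzero, hΞlstar, hImin, sub_eq_zero, eq_comm]
      using hsym 0 hzero
  have hΞhalf : Ξ (lstar / 2) = 0 := by simpa [sub_half, self_eq_neg] using hanti _ hhalf
  refine ⟨fun t ht ↦ ?_, rfl, ?_, eq_div_of_mul_eq hx_ne hIx, ?_⟩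
  · rw [hψ t ht, hψ _ (const_sub_mem_Icc_zero ht)]
    exact intervalIntegral_comp_mul_one_sub_eq_of_antisymm hlampos.le hΞcont hanti ht
  · rw [← hΞlstar, hΞinv hlast]
  · rw [← hΞhalf, hΞinv hhalf, mul_div_cancel₀ _ two_ne_zero]

/-- Under the symmetry `Λ(θ) = Λ(λ* − θ)` on `[0, λ*]`: the path `ψ*` is symmetric,
`x* = δ`, `λ* = I'(δ) = I(δ)/δ`, and `λ* = 2 I'(0)`. -/
theorem symmetric_scgf_consequences
    (δ xstar lstar : ℝ) (I Ξ : ℝ → ℝ)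
    (hδ : 0 < δ)
    (hconv : StrictConvexOn ℝ Set.univ I)
    (hC1 : ContDiff ℝ 1 I)
    (hImin : I (-δ) = 0)
    (hIpos : ∀ x : ℝ, x ≠ -δ → 0 < I x)
    (hderivδ : deriv I (-δ) = 0)
    (hxpos : 0 < xstar)
    (hxmin : ∀ x : ℝ, 0 < x → I xstar / xstar ≤ I x / x)
    (hlamdef : lstar = deriv I xstar)
    (hlamalt : lstar = I xstar / xstar)
    (hlampos : 0 < lstar)
    (hΞinvL : ∀ x ∈ Set.Icc (-δ) xstar, Ξ (deriv I x) = x)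
    (hΞinvR : ∀ r ∈ Set.Icc (0:ℝ) lstar, deriv I (Ξ r) = r)
    (hΞmaps : ∀ r ∈ Set.Icc (0:ℝ) lstar, Ξ r ∈ Set.Icc (-δ) xstar)
    (hΞcont : ContinuousOn Ξ (Set.Icc 0 lstar))
    (hΞmono : StrictMonoOn Ξ (Set.Icc 0 lstar))
    (hΞzero : Ξ 0 = -δ)
    (hΞlstar : Ξ lstar = xstar)
    (ψ : ℝ → ℝ)
    (hψ : ∀ t : ℝ, ψ t = ∫ s in (0:ℝ)..t, Ξ (lstar * (1 - s)))
    (Λ : ℝ → ℝ)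
    (hΛ : ∀ θ ∈ Set.Icc (0:ℝ) lstar, Λ θ = θ * Ξ θ - I (Ξ θ))
    (hsym : ∀ θ ∈ Set.Icc (0:ℝ) lstar, Λ θ = Λ (lstar - θ)) :
    (∀ t ∈ Set.Icc (0:ℝ) 1, ψ t = ψ (1 - t)) ∧
    xstar = δ ∧
    lstar = deriv I δ ∧
    lstar = I δ / δ ∧
    lstar = 2 * deriv I 0 :=
  symmetric_scgf_consequences_general hconv.convexOn
    (fun x _ ↦ hC1.differentiable one_ne_zero x) hImin hlampos (mapsTo_univ _ _) hΞinvR hΞcont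
    hΞzero hΞlstar (fun t _ ↦ hψ t) hΛ hsym
end

section
/- Assume the setup below and define K = 2·√(−∫₀^{λ*} Λ(θ) dθ). Then K > 0 and K = (∫₀¹ I(Ξ(λ*(1−t))) dt) / √(∫₀¹ ψ*(t) dt); that is, the cost of ψ* divided by the square root of the area swept by ψ* equals K. -/
open MeasureTheory Set Filter

/-!
As `Ξ` is an increasing inverse of `I'`, the function `I` is convex on the range of `Ξ`, and its
tangent inequality there says that `Ξ` is a subgradient of `Λ θ = θ Ξ θ - I (Ξ θ)`. Since `Ξ` is
continuous, `Λ' = Ξ`, although `Ξ` itself need not be differentiable. Both `Λ 0` and `Λ λ*`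
vanish, the latter because `λ* = I x* / x*`, and `Λ' = Ξ` is strictly increasing, so `A = -∫ Λ` is
positive. Substituting `θ = λ* (1 - t)`, integration by parts in `I (Ξ θ) = θ Λ' θ - Λ θ` gives
the cost `2 A / λ*`, while `ψ* t = -Λ (λ* (1 - t)) / λ*` gives the area `A / λ* ^ 2`. The quotient
of the cost by the square root of the area is `2 √A`.
-/

section Subgradient

theorem add_mul_sub_le_of_convexOn {S : Set ℝ} {f : ℝ → ℝ} {f' x y : ℝ} (hf : ConvexOn ℝ S f)
    (hx : x ∈ S) (hy : y ∈ S) (hf' : HasDerivWithinAt f f' S x) :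
    f x + f' * (y - x) ≤ f y := by
  rcases lt_trichotomy x y with hxy | rfl | hyx
  · have hslope := hf.le_slope_of_hasDerivWithinAt hx hy hxy hf'
    rw [slope_def_field, le_div_iff₀ (sub_pos.2 hxy)] at hslope
    linarith
  · simp
  · have hslope := hf.slope_le_of_hasDerivWithinAt hy hx hyx hf'
    rw [slope_def_field, div_le_iff₀ (sub_pos.2 hyx)] at hslope
    linarith

theorem hasFDerivWithinAt_of_subgradient {E : Type*} [NormedAddCommGroup E] [NormedSpace ℝ E]
    {s : Set E} {f : E → ℝ} {g : E → E →L[ℝ] ℝ} {x : E}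
    (hfg : ∀ y ∈ s, ∀ z ∈ s, g y (z - y) ≤ f z - f y)
    (hx : x ∈ s) (hg : ContinuousWithinAt g s x) :
    HasFDerivWithinAt f (g x) s x := by
  rw [hasFDerivWithinAt_iff_isLittleO, Asymptotics.isLittleO_iff]
  intro c hc
  filter_upwards [Metric.continuousWithinAt_iff'.1 hg c hc, self_mem_nhdsWithin] with y hgy hy
  have lower : g x (y - x) ≤ f y - f x := hfg x hx y hy
  have upper : f y - f x ≤ g y (y - x) := by
    have := hfg y hy x hx
    rw [← neg_sub y x, map_neg] at this
    linarith
  calc ‖f y - f x - g x (y - x)‖ = f y - f x - g x (y - x) :=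
        Real.norm_of_nonneg (sub_nonneg.2 lower)
    _ ≤ (g y - g x) (y - x) := sub_le_sub_right upper _
    _ ≤ ‖g y - g x‖ * ‖y - x‖ := (le_abs_self _).trans ((g y - g x).le_opNorm _)
    _ ≤ c * ‖y - x‖ := by
        gcongr
        exact (dist_eq_norm (g y) (g x) ▸ hgy).le

theorem hasDerivWithinAt_of_subgradient {s : Set ℝ} {f g : ℝ → ℝ} {x : ℝ}
    (hfg : ∀ y ∈ s, ∀ z ∈ s, (z - y) * g y ≤ f z - f y)
    (hx : x ∈ s) (hg : ContinuousWithinAt g s x) :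
    HasDerivWithinAt f (g x) s x :=
  hasFDerivWithinAt_of_subgradient (g := fun y ↦ ContinuousLinearMap.toSpanSingleton ℝ (g y))
    (by simpa using hfg) hx
    (ContinuousLinearMap.toSpanSingletonCLE.continuous.continuousAt.comp_continuousWithinAt hg)

end Subgradient

section Legendre

variable {I Ξ Λ : ℝ → ℝ} {a b : ℝ}

theorem convexOn_of_strictMonoOn_inverse_deriv (hab : a ≤ b)
    (hΞ_cont : ContinuousOn Ξ (Icc a b)) (hΞ_mono : StrictMonoOn Ξ (Icc a b))
    (hI : ∀ r ∈ Icc a b, HasDerivWithinAt I r (Icc (Ξ a) (Ξ b)) (Ξ r)) :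
    ConvexOn ℝ (Icc (Ξ a) (Ξ b)) I := by
  have exists_param : SurjOn Ξ (Icc a b) (Icc (Ξ a) (Ξ b)) := intermediate_value_Icc hab hΞ_cont
  have differentiableOn : DifferentiableOn ℝ I (Icc (Ξ a) (Ξ b)) := by
    intro x hx
    obtain ⟨r, hr, rfl⟩ := exists_param hx
    exact (hI r hr).differentiableWithinAt
  refine MonotoneOn.convexOn_of_deriv (convex_Icc _ _) differentiableOn.continuousOn
    (differentiableOn.mono interior_subset) ?_
  have deriv_eq {r : ℝ} (hr : r ∈ Icc a b) (hΞr : Ξ r ∈ interior (Icc (Ξ a) (Ξ b))) :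
      deriv I (Ξ r) = r :=
    ((hI r hr).hasDerivAt (mem_interior_iff_mem_nhds.1 hΞr)).deriv
  intro x hx y hy hxy
  obtain ⟨r, hr, rfl⟩ := exists_param (interior_subset hx)
  obtain ⟨s, hs, rfl⟩ := exists_param (interior_subset hy)
  rw [deriv_eq hr hx, deriv_eq hs hy]
  exact (hΞ_mono.le_iff_le hr hs).1 hxy

theorem hasDerivWithinAt_legendre (hΞ_cont : ContinuousOn Ξ (Icc a b))
    (hΞ_mono : StrictMonoOn Ξ (Icc a b))
    (hI : ∀ r ∈ Icc a b, HasDerivWithinAt I r (Icc (Ξ a) (Ξ b)) (Ξ r))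
    (hΛ : ∀ θ ∈ Icc a b, Λ θ = θ * Ξ θ - I (Ξ θ)) {θ : ℝ} (hθ : θ ∈ Icc a b) :
    HasDerivWithinAt Λ (Ξ θ) (Icc a b) θ := by
  have hab : a ≤ b := hθ.1.trans hθ.2
  have hΞ_mapsTo : MapsTo Ξ (Icc a b) (Icc (Ξ a) (Ξ b)) := hΞ_mono.monotoneOn.mapsTo_Icc
  refine hasDerivWithinAt_of_subgradient (fun r hr s hs ↦ ?_) hθ (hΞ_cont θ hθ)
  have tangent : I (Ξ s) + s * (Ξ r - Ξ s) ≤ I (Ξ r) :=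
    add_mul_sub_le_of_convexOn (convexOn_of_strictMonoOn_inverse_deriv hab hΞ_cont hΞ_mono hI)
      (hΞ_mapsTo hs) (hΞ_mapsTo hr) (hI s hs)
  rw [hΛ r hr, hΛ s hs]
  linarith

end Legendre

section Calculus

theorem lt_max_of_hasDerivWithinAt_strictMonoOn {f f' : ℝ → ℝ} {a b x : ℝ}
    (hf : ∀ y ∈ Icc a b, HasDerivWithinAt f (f' y) (Icc a b) y)
    (hf' : StrictMonoOn f' (Icc a b)) (hx : x ∈ Ioo a b) :
    f x < max (f a) (f b) := by
  have hab : a < b := hx.1.trans hx.2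
  have deriv_eq : EqOn f' (deriv f) (Ioo a b) := fun y hy ↦
    ((hf y (Ioo_subset_Icc_self hy)).hasDerivAt (Icc_mem_nhds hy.1 hy.2)).deriv.symm
  have hconv : StrictConvexOn ℝ (Icc a b) f := by
    refine StrictMonoOn.strictConvexOn_of_deriv (convex_Icc a b)
      (fun y hy ↦ (hf y hy).continuousWithinAt) ?_
    rw [interior_Icc]
    exact (hf'.mono Ioo_subset_Icc_self).congr deriv_eq
  exact hconv.lt_on_openSegment (left_mem_Icc.2 hab.le) (right_mem_Icc.2 hab.le) hab.ne
    (openSegment_eq_Ioo hab ▸ hx)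

theorem integral_neg_of_hasDerivWithinAt_strictMonoOn {f f' : ℝ → ℝ} {a b : ℝ} (hab : a < b)
    (hf : ∀ x ∈ Icc a b, HasDerivWithinAt f (f' x) (Icc a b) x)
    (hf' : StrictMonoOn f' (Icc a b)) (ha : f a ≤ 0) (hb : f b ≤ 0) :
    ∫ x in a..b, f x < 0 := by
  have hf_neg : ∀ x ∈ Ioo a b, 0 < -f x := fun x hx ↦ neg_pos.2 <|
    (lt_max_of_hasDerivWithinAt_strictMonoOn hf hf' hx).trans_le (max_le ha hb)
  have hf_int : IntervalIntegrable f volume a b :=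
    ContinuousOn.intervalIntegrable_of_Icc hab.le fun x hx ↦ (hf x hx).continuousWithinAt
  rw [← neg_pos, ← intervalIntegral.integral_neg]
  exact intervalIntegral.intervalIntegral_pos_of_pos_on hf_int.neg hf_neg hab

theorem integral_mul_deriv_sub_self {f f' : ℝ → ℝ} {a b : ℝ}
    (hf : ∀ x ∈ uIcc a b, HasDerivWithinAt f (f' x) (uIcc a b) x)
    (hf' : IntervalIntegrable f' volume a b) :
    ∫ x in a..b, (x * f' x - f x) = b * f b - a * f a - 2 * ∫ x in a..b, f x := by
  have hf_int : IntervalIntegrable f volume a b :=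
    ContinuousOn.intervalIntegrable fun x hx ↦ (hf x hx).continuousWithinAt
  have parts : ∫ x in a..b, x * f' x = b * f b - a * f a - ∫ x in a..b, 1 * f x :=
    intervalIntegral.integral_mul_deriv_eq_deriv_mul_of_hasDerivWithinAt
      (fun x _ ↦ hasDerivWithinAt_id x _) hf intervalIntegrable_const hf'
  rw [intervalIntegral.integral_sub (hf'.continuousOn_mul (continuousOn_id' _)) hf_int, parts]
  simp only [one_mul]
  ring

theorem integral_comp_mul_one_sub {E : Type*} [NormedAddCommGroup E] [NormedSpace ℝ E]
    (f : ℝ → E) {l : ℝ} (hl : l ≠ 0) (t : ℝ) :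
    ∫ s in (0 : ℝ)..t, f (l * (1 - s)) = l⁻¹ • ∫ θ in l * (1 - t)..l, f θ := by
  simpa [mul_sub] using intervalIntegral.integral_comp_sub_mul (a := 0) (b := t) f hl l

theorem integral_comp_mul_one_sub_of_eqOn_mul_deriv_sub {f f' g : ℝ → ℝ} {l : ℝ} (hl : l ≠ 0)
    (hf : ∀ x ∈ uIcc 0 l, HasDerivWithinAt f (f' x) (uIcc 0 l) x)
    (hf' : IntervalIntegrable f' volume 0 l)
    (hg : EqOn g (fun x ↦ x * f' x - f x) (uIcc 0 l)) :
    ∫ t in (0 : ℝ)..1, g (l * (1 - t)) = f l - 2 * l⁻¹ * ∫ x in (0 : ℝ)..l, f x := by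
  rw [integral_comp_mul_one_sub g hl, sub_self, mul_zero, smul_eq_mul,
    intervalIntegral.integral_congr hg, integral_mul_deriv_sub_self hf hf']
  field_simp
  ring

theorem integral_deriv_comp_mul_one_sub {f f' : ℝ → ℝ} {l t : ℝ} (hl : 0 < l)
    (hf : ∀ x ∈ Icc 0 l, HasDerivWithinAt f (f' x) (Icc 0 l) x)
    (hf' : ContinuousOn f' (Icc 0 l)) (ht : t ∈ Icc (0 : ℝ) 1) :
    ∫ s in (0 : ℝ)..t, f' (l * (1 - s)) = l⁻¹ * (f l - f (l * (1 - t))) := by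
  have lower_nonneg : 0 ≤ l * (1 - t) := mul_nonneg hl.le (sub_nonneg.2 ht.2)
  have lower_le : l * (1 - t) ≤ l := mul_le_of_le_one_right hl.le (sub_le_self 1 ht.1)
  have subset : Icc (l * (1 - t)) l ⊆ Icc 0 l := Icc_subset_Icc_left lower_nonneg
  rw [integral_comp_mul_one_sub f' hl.ne', smul_eq_mul,
    intervalIntegral.integral_eq_sub_of_hasDerivAt_of_le lower_le
      (fun x hx ↦ (hf x (subset hx)).continuousWithinAt.mono subset)
      (fun x hx ↦ (hf x (subset (Ioo_subset_Icc_self hx))).hasDerivAt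
        (Icc_mem_nhds (lower_nonneg.trans_lt hx.1) hx.2))
      ((hf'.mono subset).intervalIntegrable_of_Icc lower_le)]

theorem integral_integral_deriv_comp_mul_one_sub {f f' : ℝ → ℝ} {l : ℝ} (hl : 0 < l)
    (hf : ∀ x ∈ Icc 0 l, HasDerivWithinAt f (f' x) (Icc 0 l) x)
    (hf' : ContinuousOn f' (Icc 0 l)) :
    ∫ t in (0 : ℝ)..1, ∫ s in (0 : ℝ)..t, f' (l * (1 - s)) =
      l⁻¹ * (f l - l⁻¹ * ∫ θ in (0 : ℝ)..l, f θ) := by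
  have hf_int : IntervalIntegrable f volume 0 l :=
    ContinuousOn.intervalIntegrable_of_Icc hl.le fun x hx ↦ (hf x hx).continuousWithinAt
  calc ∫ t in (0 : ℝ)..1, ∫ s in (0 : ℝ)..t, f' (l * (1 - s))
      = ∫ t in (0 : ℝ)..1, l⁻¹ * (f l - f (l * (1 - t))) := by
        refine intervalIntegral.integral_congr fun t ht ↦ ?_
        rw [uIcc_of_le zero_le_one] at ht
        exact integral_deriv_comp_mul_one_sub hl hf hf' ht
    _ = l⁻¹ * (l⁻¹ * ∫ θ in (0 : ℝ)..l, (f l - f θ)) := by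
        rw [intervalIntegral.integral_const_mul,
          integral_comp_mul_one_sub (fun θ ↦ f l - f θ) hl.ne', sub_self, mul_zero, smul_eq_mul]
    _ = l⁻¹ * (f l - l⁻¹ * ∫ θ in (0 : ℝ)..l, f θ) := by
        rw [intervalIntegral.integral_sub intervalIntegrable_const hf_int,
          intervalIntegral.integral_const, sub_zero, smul_eq_mul]
        field_simp

end Calculus

theorem K_formula_general {I Ξ Λ ψ : ℝ → ℝ} {l K : ℝ} (hl : 0 < l)
    (hΞ_cont : ContinuousOn Ξ (Icc 0 l)) (hΞ_mono : StrictMonoOn Ξ (Icc 0 l))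
    (hI : ∀ r ∈ Icc 0 l, HasDerivWithinAt I r (Icc (Ξ 0) (Ξ l)) (Ξ r))
    (hI_zero : I (Ξ 0) = 0) (hI_l : I (Ξ l) = l * Ξ l)
    (hψ : ∀ t ∈ Icc (0 : ℝ) 1, ψ t = ∫ s in (0 : ℝ)..t, Ξ (l * (1 - s)))
    (hΛ : ∀ θ ∈ Icc 0 l, Λ θ = θ * Ξ θ - I (Ξ θ))
    (hK : K = 2 * √(-∫ θ in (0 : ℝ)..l, Λ θ)) :
    0 < K ∧ K = (∫ t in (0 : ℝ)..1, I (Ξ (l * (1 - t)))) / √(∫ t in (0 : ℝ)..1, ψ t) := by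
  have hΛ_deriv : ∀ θ ∈ Icc 0 l, HasDerivWithinAt Λ (Ξ θ) (Icc 0 l) θ := fun θ ↦
    hasDerivWithinAt_legendre hΞ_cont hΞ_mono hI hΛ
  have hΛ_zero : Λ 0 = 0 := by rw [hΛ 0 (left_mem_Icc.2 hl.le), hI_zero]; ring
  have hΛ_l : Λ l = 0 := by rw [hΛ l (right_mem_Icc.2 hl.le), hI_l, sub_self]
  set A := -∫ θ in (0 : ℝ)..l, Λ θ
  have hA_pos : 0 < A := neg_pos.2 <|
    integral_neg_of_hasDerivWithinAt_strictMonoOn hl hΛ_deriv hΞ_mono hΛ_zero.le hΛ_l.le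
  have cost : ∫ t in (0 : ℝ)..1, I (Ξ (l * (1 - t))) = 2 * A / l := by
    rw [← uIcc_of_le hl.le] at hΛ_deriv hΛ
    rw [integral_comp_mul_one_sub_of_eqOn_mul_deriv_sub (g := fun θ ↦ I (Ξ θ)) hl.ne' hΛ_deriv
      (hΞ_cont.intervalIntegrable_of_Icc hl.le) fun θ hθ ↦ by simp [hΛ θ hθ], hΛ_l]
    ring
  have area : ∫ t in (0 : ℝ)..1, ψ t = A / l ^ 2 := by
    rw [← uIcc_of_le zero_le_one] at hψ
    rw [intervalIntegral.integral_congr hψ,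
      integral_integral_deriv_comp_mul_one_sub hl hΛ_deriv hΞ_cont, hΛ_l]
    ring
  refine ⟨by rw [hK]; positivity, ?_⟩
  calc K = 2 * √A := hK
    _ = 2 * A / l / (√A / l) := by
        field_simp
        exact Real.sq_sqrt hA_pos.le
    _ = _ := by rw [cost, area, Real.sqrt_div hA_pos.le, Real.sqrt_sq hl.le]

/-- With `K = 2 √(−∫₀^{λ*} Λ)`, we have `K > 0` and `K` equals the cost of `ψ*`
divided by the square root of the area it sweeps. -/
theorem K_formula
    (δ xstar lstar : ℝ) (I Ξ : ℝ → ℝ)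
    (hδ : 0 < δ)
    (hconv : StrictConvexOn ℝ Set.univ I)
    (hC1 : ContDiff ℝ 1 I)
    (hImin : I (-δ) = 0)
    (hIpos : ∀ x : ℝ, x ≠ -δ → 0 < I x)
    (hderivδ : deriv I (-δ) = 0)
    (hxpos : 0 < xstar)
    (hxmin : ∀ x : ℝ, 0 < x → I xstar / xstar ≤ I x / x)
    (hlamdef : lstar = deriv I xstar)
    (hlamalt : lstar = I xstar / xstar)
    (hlampos : 0 < lstar)
    (hΞinvL : ∀ x ∈ Set.Icc (-δ) xstar, Ξ (deriv I x) = x)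
    (hΞinvR : ∀ r ∈ Set.Icc (0:ℝ) lstar, deriv I (Ξ r) = r)
    (hΞmaps : ∀ r ∈ Set.Icc (0:ℝ) lstar, Ξ r ∈ Set.Icc (-δ) xstar)
    (hΞcont : ContinuousOn Ξ (Set.Icc 0 lstar))
    (hΞmono : StrictMonoOn Ξ (Set.Icc 0 lstar))
    (hΞzero : Ξ 0 = -δ)
    (hΞlstar : Ξ lstar = xstar)
    (ψ : ℝ → ℝ)
    (hψ : ∀ t : ℝ, ψ t = ∫ s in (0:ℝ)..t, Ξ (lstar * (1 - s)))
    (Λ : ℝ → ℝ)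
    (hΛ : ∀ θ ∈ Set.Icc (0:ℝ) lstar, Λ θ = θ * Ξ θ - I (Ξ θ))
    (K : ℝ)
    (hK : K = 2 * Real.sqrt (-∫ θ in (0:ℝ)..lstar, Λ θ)) :
    0 < K ∧
    K = (∫ t in (0:ℝ)..1, I (Ξ (lstar * (1 - t)))) /
        Real.sqrt (∫ t in (0:ℝ)..1, ψ t) := by
  have hI (r : ℝ) (hr : r ∈ Icc 0 lstar) : HasDerivAt I r (Ξ r) := by
    simpa only [hΞinvR r hr] using (hC1.differentiable one_ne_zero (Ξ r)).hasDerivAt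
  exact K_formula_general hlampos hΞcont hΞmono (fun r hr ↦ (hI r hr).hasDerivWithinAt)
    (hΞzero ▸ hImin) (by rw [hΞlstar, hlamalt, div_mul_cancel₀ _ hxpos.ne'])
    (fun t _ ↦ hψ t) hΛ hK
end

section
/- Assume the setup below, with I : ℝ → ℝ convex everywhere. Let φ : [0, 1] → ℝ be continuously differentiable with φ(0) = 0 and ∫₀¹ φ(t) dt ≥ ∫₀¹ ψ*(t) dt. Then ∫₀¹ I(φ'(t)) dt ≥ ∫₀¹ I(ψ*'(t)) dt. That is, ψ* minimizes the rate-functional cost among all paths starting at 0 that sweep at least the same area. -/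
open MeasureTheory Set Filter

/-!
The area of an absolutely continuous path `φ` starting at `0` is linear in its slope:
`∫₀¹ φ = ∫₀¹ (1 - t) φ'(t) dt`. So the problem is to minimize a convex functional of the slope under
a linear constraint, and `I'(ψ*'(t)) = λ* (1 - t)` is its Lagrange condition with multiplier `λ*`.
Integrating the tangent line inequality
`I(φ'(t)) ≥ I(ψ*'(t)) + λ* (1 - t) (φ'(t) - ψ*'(t))` gives
`∫ I(φ') ≥ ∫ I(ψ*') + λ* (∫ φ - ∫ ψ*)`.
-/

section Convex

variable {I : ℝ → ℝ} {S : Set ℝ}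

lemma add_mul_sub_le_of_convexOn_of_hasDerivAt (hI : ConvexOn ℝ S I) {x y m : ℝ} (hx : x ∈ S)
    (hy : y ∈ S) (hm : HasDerivAt I m x) : I x + m * (y - x) ≤ I y := by
  rcases lt_trichotomy x y with hxy | rfl | hyx
  · have hslope := hI.le_slope_of_hasDerivAt hx hy hxy hm
    rw [slope_def_field, le_div_iff₀ (sub_pos.2 hxy)] at hslope
    linarith
  · simp
  · have hslope := hI.slope_le_of_hasDerivAt hy hx hyx hm
    rw [slope_def_field, div_le_iff₀ (sub_pos.2 hyx)] at hslope
    linarith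

variable {Ξ : ℝ → ℝ} {s : Set ℝ}

lemma monotoneOn_of_convexOn_of_hasDerivAt (hI : ConvexOn ℝ S I) (hΞS : MapsTo Ξ s S)
    (hΞ : ∀ r ∈ s, HasDerivAt I r (Ξ r)) : MonotoneOn Ξ s := by
  intro p hp q hq hpq
  rcases hpq.eq_or_lt with rfl | hlt
  · rfl
  have tangent_at_p := add_mul_sub_le_of_convexOn_of_hasDerivAt hI (hΞS hp) (hΞS hq) (hΞ p hp)
  have tangent_at_q := add_mul_sub_le_of_convexOn_of_hasDerivAt hI (hΞS hq) (hΞS hp) (hΞ q hq)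
  have hmul : 0 ≤ (q - p) * (Ξ q - Ξ p) := by linarith
  exact sub_nonneg.1 (nonneg_of_mul_nonneg_right hmul (sub_pos.2 hlt))

lemma monotoneOn_comp_of_convexOn_of_hasDerivAt (hI : ConvexOn ℝ S I) (hΞS : MapsTo Ξ s S)
    (hs : ∀ r ∈ s, 0 ≤ r) (hΞ : ∀ r ∈ s, HasDerivAt I r (Ξ r)) :
    MonotoneOn (fun r ↦ I (Ξ r)) s := by
  intro p hp q hq hpq
  have hΞpq := monotoneOn_of_convexOn_of_hasDerivAt hI hΞS hΞ hp hq hpq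
  calc I (Ξ p) ≤ I (Ξ p) + p * (Ξ q - Ξ p) :=
        le_add_of_nonneg_right (mul_nonneg (hs p hp) (sub_nonneg.2 hΞpq))
    _ ≤ I (Ξ q) := add_mul_sub_le_of_convexOn_of_hasDerivAt hI (hΞS hp) (hΞS hq) (hΞ p hp)

lemma integral_comp_le_of_convexOn_of_integral_mul_le {α : Type*} [MeasurableSpace α]
    {μ : Measure α} {w f g : α → ℝ} (hI : ConvexOn ℝ S I) (hfS : ∀ᵐ t ∂μ, f t ∈ S)
    (hgS : ∀ᵐ t ∂μ, g t ∈ S) (hderiv : ∀ᵐ t ∂μ, HasDerivAt I (w t) (g t))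
    (hIf : Integrable (fun t ↦ I (f t)) μ) (hIg : Integrable (fun t ↦ I (g t)) μ)
    (hwf : Integrable (fun t ↦ w t * f t) μ) (hwg : Integrable (fun t ↦ w t * g t) μ)
    (hle : ∫ t, w t * g t ∂μ ≤ ∫ t, w t * f t ∂μ) :
    ∫ t, I (g t) ∂μ ≤ ∫ t, I (f t) ∂μ := by
  have htangent : ∀ᵐ t ∂μ, w t * f t - w t * g t ≤ I (f t) - I (g t) := by
    filter_upwards [hfS, hgS, hderiv] with t hft hgt ht
    linarith [add_mul_sub_le_of_convexOn_of_hasDerivAt hI hgt hft ht]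
  have hintegrated := integral_mono_ae (hwf.sub hwg) (hIf.sub hIg) htangent
  simp only [Pi.sub_apply] at hintegrated
  rw [integral_sub hwf hwg, integral_sub hIf hIg] at hintegrated
  linarith

end Convex

lemma eq_integral_of_hasDerivAt_of_continuousOn {φ φ' : ℝ → ℝ} {a b t : ℝ}
    (hderiv : ∀ s ∈ Icc a b, HasDerivAt φ (φ' s) s) (hcont : ContinuousOn φ' (Icc a b))
    (ha : φ a = 0) (ht : t ∈ Icc a b) : φ t = ∫ s in a..t, φ' s := by
  have hsub : uIcc a t ⊆ Icc a b := uIcc_subset_Icc ⟨le_rfl, ht.1.trans ht.2⟩ ht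
  rw [intervalIntegral.integral_eq_sub_of_hasDerivAt (fun s hs ↦ hderiv s (hsub hs))
    (hcont.mono hsub).intervalIntegrable, ha, sub_zero]

lemma integral_integral_eq_integral_sub_mul {f : ℝ → ℝ} {a b : ℝ}
    (hf : IntervalIntegrable f volume a b) :
    ∫ t in a..b, ∫ s in a..t, f s = ∫ t in a..b, (b - t) * f t := by
  have hprimitive : AbsolutelyContinuousOnInterval (fun t ↦ ∫ s in a..t, f s) a b :=
    hf.absolutelyContinuousOnInterval_intervalIntegral left_mem_uIcc
  have hweight : AbsolutelyContinuousOnInterval (fun t ↦ b - t) a b :=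
    ContDiffOn.absolutelyContinuousOnInterval (by fun_prop)
  have hparts := hweight.integral_mul_deriv_eq_deriv_mul hprimitive
  have hderiv : ∫ t in a..b, (b - t) * deriv (fun t ↦ ∫ s in a..t, f s) t =
      ∫ t in a..b, (b - t) * f t := by
    refine intervalIntegral.integral_congr_ae ?_
    filter_upwards [hf.ae_hasDerivAt_integral] with t ht htab
    rw [(ht (uIoc_subset_uIcc htab) a left_mem_uIcc).deriv]
  simpa [hderiv] using hparts.symm

lemma integral_comp_le_of_integral_integral_le {I f g : ℝ → ℝ} {a b c : ℝ} (hab : a ≤ b)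
    (hc : 0 ≤ c) (hI : ConvexOn ℝ univ I)
    (hderiv : ∀ t ∈ Icc a b, HasDerivAt I (c * (b - t)) (g t))
    (hf : IntervalIntegrable f volume a b) (hg : IntervalIntegrable g volume a b)
    (hIf : IntervalIntegrable (fun t ↦ I (f t)) volume a b)
    (hIg : IntervalIntegrable (fun t ↦ I (g t)) volume a b)
    (harea : ∫ t in a..b, ∫ s in a..t, g s ≤ ∫ t in a..b, ∫ s in a..t, f s) :
    ∫ t in a..b, I (g t) ≤ ∫ t in a..b, I (f t) := by
  have hweighted {h : ℝ → ℝ} (hh : IntervalIntegrable h volume a b) :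
      IntervalIntegrable (fun t ↦ c * (b - t) * h t) volume a b :=
    hh.continuousOn_mul (by fun_prop)
  have hle : ∫ t in a..b, c * (b - t) * g t ≤ ∫ t in a..b, c * (b - t) * f t := by
    simp only [mul_assoc, intervalIntegral.integral_const_mul]
    rw [← integral_integral_eq_integral_sub_mul hf, ← integral_integral_eq_integral_sub_mul hg]
    exact mul_le_mul_of_nonneg_left harea hc
  rw [intervalIntegral.integral_of_le hab, intervalIntegral.integral_of_le hab] at hle ⊢
  refine integral_comp_le_of_convexOn_of_integral_mul_le hI (by simp) (by simp) ?_
    hIf.1 hIg.1 (hweighted hf).1 (hweighted hg).1 hle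
  filter_upwards [ae_restrict_mem measurableSet_Ioc] with t ht
  exact hderiv t (Ioc_subset_Icc_self ht)

theorem psi_star_optimal_general {l : ℝ} {I Ξ ψ φ φ' : ℝ → ℝ} (hl : 0 ≤ l)
    (hI : ConvexOn ℝ univ I) (hΞ : ∀ r ∈ Icc 0 l, HasDerivAt I r (Ξ r))
    (hψ : ∀ t ∈ Icc (0 : ℝ) 1, ψ t = ∫ s in (0 : ℝ)..t, Ξ (l * (1 - s)))
    (hφ : ∀ t ∈ Icc (0 : ℝ) 1, φ t = ∫ s in (0 : ℝ)..t, φ' s)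
    (hφ' : IntervalIntegrable φ' volume 0 1)
    (hIφ' : IntervalIntegrable (fun t ↦ I (φ' t)) volume 0 1)
    (harea : ∫ t in (0 : ℝ)..1, ψ t ≤ ∫ t in (0 : ℝ)..1, φ t) :
    ∫ t in (0 : ℝ)..1, I (Ξ (l * (1 - t))) ≤ ∫ t in (0 : ℝ)..1, I (φ' t) := by
  have hunit : uIcc (0 : ℝ) 1 = Icc 0 1 := uIcc_of_le zero_le_one
  have hmaps : MapsTo (fun t ↦ l * (1 - t)) (uIcc 0 1) (Icc 0 l) := by
    rw [hunit]
    exact fun t ht ↦ ⟨mul_nonneg hl (sub_nonneg.2 ht.2),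
      mul_le_of_le_one_right hl (sub_le_self 1 ht.1)⟩
  have hanti : AntitoneOn (fun t ↦ l * (1 - t)) (uIcc 0 1) :=
    fun _ _ _ _ hst ↦ mul_le_mul_of_nonneg_left (sub_le_sub_left hst 1) hl
  -- `Ξ` jumps at the slopes of affine pieces of `I`: integrability comes from monotonicity.
  have hΞmono : MonotoneOn Ξ (Icc 0 l) :=
    monotoneOn_of_convexOn_of_hasDerivAt hI (mapsTo_univ _ _) hΞ
  have hIΞmono : MonotoneOn (fun r ↦ I (Ξ r)) (Icc 0 l) :=
    monotoneOn_comp_of_convexOn_of_hasDerivAt hI (mapsTo_univ _ _) (fun _ hr ↦ hr.1) hΞ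
  rw [← hunit] at hψ hφ
  rw [intervalIntegral.integral_congr hψ, intervalIntegral.integral_congr hφ] at harea
  exact integral_comp_le_of_integral_integral_le zero_le_one hl hI
    (fun t ht ↦ hΞ _ (hmaps (hunit ▸ ht))) hφ'
    (hΞmono.comp_AntitoneOn hanti hmaps).intervalIntegrable hIφ'
    (hIΞmono.comp_AntitoneOn hanti hmaps).intervalIntegrable harea

/-- Optimality of `ψ*`: among continuously differentiable paths `φ` on `[0,1]` with
`φ(0) = 0` sweeping at least the area of `ψ*`, the path `ψ*` minimizes the cost
`∫₀¹ I(φ'(t)) dt`. -/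
theorem psi_star_optimal
    (δ xstar lstar : ℝ) (I Ξ : ℝ → ℝ)
    (hδ : 0 < δ)
    (hconv : StrictConvexOn ℝ Set.univ I)
    (hC1 : ContDiff ℝ 1 I)
    (hImin : I (-δ) = 0)
    (hIpos : ∀ x : ℝ, x ≠ -δ → 0 < I x)
    (hderivδ : deriv I (-δ) = 0)
    (hxpos : 0 < xstar)
    (hxmin : ∀ x : ℝ, 0 < x → I xstar / xstar ≤ I x / x)
    (hlamdef : lstar = deriv I xstar)
    (hlamalt : lstar = I xstar / xstar)
    (hlampos : 0 < lstar)
    (hΞinvL : ∀ x ∈ Set.Icc (-δ) xstar, Ξ (deriv I x) = x)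
    (hΞinvR : ∀ r ∈ Set.Icc (0:ℝ) lstar, deriv I (Ξ r) = r)
    (hΞmaps : ∀ r ∈ Set.Icc (0:ℝ) lstar, Ξ r ∈ Set.Icc (-δ) xstar)
    (hΞcont : ContinuousOn Ξ (Set.Icc 0 lstar))
    (hΞmono : StrictMonoOn Ξ (Set.Icc 0 lstar))
    (hΞzero : Ξ 0 = -δ)
    (hΞlstar : Ξ lstar = xstar)
    (ψ : ℝ → ℝ)
    (hψ : ∀ t : ℝ, ψ t = ∫ s in (0:ℝ)..t, Ξ (lstar * (1 - s)))
    (hIconv : ConvexOn ℝ Set.univ I)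
    (φ φ' : ℝ → ℝ)
    (hφderiv : ∀ t ∈ Set.Icc (0:ℝ) 1, HasDerivAt φ (φ' t) t)
    (hφ'cont : ContinuousOn φ' (Set.Icc (0:ℝ) 1))
    (hφ0 : φ 0 = 0)
    (harea : (∫ t in (0:ℝ)..1, ψ t) ≤ ∫ t in (0:ℝ)..1, φ t) :
    (∫ t in (0:ℝ)..1, I (Ξ (lstar * (1 - t)))) ≤ ∫ t in (0:ℝ)..1, I (φ' t) := by
  have hΞderiv : ∀ r ∈ Icc 0 lstar, HasDerivAt I r (Ξ r) := fun r hr ↦ by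
    simpa only [hΞinvR r hr] using (hC1.differentiable one_ne_zero (Ξ r)).hasDerivAt
  have hφ : ∀ t ∈ Icc (0 : ℝ) 1, φ t = ∫ s in (0 : ℝ)..t, φ' s := fun _ ht ↦
    eq_integral_of_hasDerivAt_of_continuousOn hφderiv hφ'cont hφ0 ht
  rw [← uIcc_of_le zero_le_one] at hφ'cont
  exact psi_star_optimal_general hlampos.le hIconv hΞderiv (fun t _ ↦ hψ t) hφ
    hφ'cont.intervalIntegrable (hC1.continuous.comp_continuousOn hφ'cont).intervalIntegrable harea
end

section
/- Assume the setup below, define K = 2·√(−∫₀^{λ*} Λ(θ) dθ), fix b > 0, set a = 2λ*√b / K, and define the rescaled path ψ*_b(t) = a·ψ*(t/a) for t ∈ [0, a]. Then: (i) ψ*_b(a) = 0; (ii) ∫₀^a ψ*_b(t) dt = b; and (iii) ∫₀^a I((ψ*_b)'(t)) dt = K·√b. In particular the large-deviations cost of the most likely path sweeping area b is K√b. -/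
open MeasureTheory Set Filter

/-!
Since `Ξ θ` maximizes `x ↦ θ * x - I x`, comparing the maximizers at two values of `θ` shows that
`Ξ θ` is a subgradient of `Λ` at `θ`, and continuity of `Ξ` then forces `Λ' = Ξ`. So the path is
`ψ t = -Λ (λ (1 - t)) / λ`; it returns to `0` because `Λ 0 = Λ λ = 0`, and its area is `J / λ ^ 2`
with `J = -∫ Λ`. Integrating `I (Ξ θ) = θ * Λ' θ - Λ θ` by parts gives the cost `2 * J / λ`.
Dilation by `a` multiplies the area by `a ^ 2` and the cost by `a`, and `a = λ * √b / √J`. Finally,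
`J > 0` because `Λ` is convex, vanishes at both ends and is not identically zero.
-/

open scoped Topology

/-- `g` selects a subgradient of `F` at every point of `s`, where the supporting lines are only
required to lie below `F` on `s` itself. -/
def SubgradientOn (g F : ℝ → ℝ) (s : Set ℝ) : Prop :=
  ∀ ⦃x⦄, x ∈ s → ∀ ⦃y⦄, y ∈ s → F x + g x * (y - x) ≤ F y

/-- The path from `0` whose slope at time `t` is `g (c * (1 - t))`: the argument of `g` decreases
linearly from `c` to `0` during the unit time interval. For `g = Ξ` and `c = λ*` it is `ψ*`. -/
noncomputable def optimalPath (g : ℝ → ℝ) (c t : ℝ) : ℝ :=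
  ∫ s in (0 : ℝ)..t, g (c * (1 - s))

section ChangeOfVariables

variable {E : Type*} [NormedAddCommGroup E] [NormedSpace ℝ E]

lemma smul_integral_comp_mul_one_sub (f : ℝ → E) (c t : ℝ) :
    c • ∫ s in (0 : ℝ)..t, f (c * (1 - s)) = ∫ x in c * (1 - t)..c, f x := by
  simpa only [mul_sub, mul_one, mul_zero, sub_zero] using
    intervalIntegral.smul_integral_comp_sub_mul (a := 0) (b := t) f c c

lemma integral_comp_div_self (f : ℝ → E) (a : ℝ) :
    ∫ t in (0 : ℝ)..a, f (t / a) = a • ∫ s in (0 : ℝ)..1, f s := by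
  rcases eq_or_ne a 0 with rfl | ha
  · rw [intervalIntegral.integral_same, zero_smul]
  · rw [intervalIntegral.integral_comp_div f ha, zero_div, div_self ha]

lemma integral_smul_comp_div_self (f : ℝ → E) (a : ℝ) :
    ∫ t in (0 : ℝ)..a, a • f (t / a) = a ^ 2 • ∫ s in (0 : ℝ)..1, f s := by
  rw [intervalIntegral.integral_smul, integral_comp_div_self, smul_smul, sq]

end ChangeOfVariables

lemma isMaxOn_mul_sub_of_hasDerivWithinAt {f : ℝ → ℝ} {s : Set ℝ} {x m : ℝ} (hf : ConvexOn ℝ s f)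
    (hx : x ∈ s) (hm : HasDerivWithinAt f m s x) : IsMaxOn (fun y ↦ m * y - f y) s x := by
  intro y hy
  change m * y - f y ≤ m * x - f x
  rcases lt_trichotomy x y with hxy | rfl | hyx
  · have hslope := hf.le_slope_of_hasDerivWithinAt hx hy hxy hm
    rw [slope_def_field, le_div_iff₀ (sub_pos.2 hxy)] at hslope
    linarith
  · exact le_rfl
  · have hslope := hf.slope_le_of_hasDerivWithinAt hy hx hyx hm
    rw [slope_def_field, div_le_iff₀ (sub_pos.2 hyx)] at hslope
    linarith

namespace SubgradientOn

variable {g F I : ℝ → ℝ} {s t : Set ℝ} {a b c x : ℝ}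

lemma of_isMaxOn (hmaps : MapsTo g t s)
    (hmax : ∀ θ ∈ t, IsMaxOn (fun x ↦ θ * x - I x) s (g θ))
    (hF : ∀ θ ∈ t, F θ = θ * g θ - I (g θ)) : SubgradientOn g F t := by
  intro θ hθ η hη
  have hle : η * g θ - I (g θ) ≤ η * g η - I (g η) := hmax η hη (hmaps hθ)
  rw [hF θ hθ, hF η hη]
  linarith

lemma mono (h : SubgradientOn g F t) (hst : s ⊆ t) : SubgradientOn g F s :=
  fun _ hx _ hy ↦ h (hst hx) (hst hy)

lemma norm_sub_sub_le (h : SubgradientOn g F s) {y : ℝ} (hx : x ∈ s) (hy : y ∈ s) :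
    ‖F y - F x - (y - x) * g x‖ ≤ ‖(g y - g x) * (y - x)‖ := by
  have hxy := h hx hy
  have hyx := h hy hx
  refine abs_le_abs_of_nonneg ?_ ?_ <;> linarith

lemma hasDerivWithinAt (h : SubgradientOn g F s) (hx : x ∈ s) (hg : ContinuousWithinAt g s x) :
    HasDerivWithinAt F (g x) s x := by
  have hsmall : (fun y ↦ g y - g x) =o[𝓝[s] x] (fun _ ↦ (1 : ℝ)) :=
    (Asymptotics.isLittleO_one_iff ℝ).2 (tendsto_sub_nhds_zero_iff.2 hg)
  have hprod : (fun y ↦ (g y - g x) * (y - x)) =o[𝓝[s] x] fun y ↦ y - x := by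
    simpa only [one_mul] using hsmall.mul_isBigO (Asymptotics.isBigO_refl (fun y ↦ y - x) _)
  refine hasDerivWithinAt_iff_isLittleO.2 (Asymptotics.IsBigO.trans_isLittleO ?_ hprod)
  refine .of_bound' (eventually_mem_nhdsWithin.mono fun y hy ↦ ?_)
  exact h.norm_sub_sub_le hx hy

lemma continuousOn (h : SubgradientOn g F s) (hg : ContinuousOn g s) : ContinuousOn F s :=
  fun x hx ↦ (h.hasDerivWithinAt hx (hg x hx)).continuousWithinAt

lemma integral_eq_sub (h : SubgradientOn g F (Icc a b)) (hg : ContinuousOn g (Icc a b))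
    (hab : a ≤ b) : ∫ x in a..b, g x = F b - F a :=
  intervalIntegral.integral_eq_sub_of_hasDerivAt_of_le hab (h.continuousOn hg)
    (fun x hx ↦ (h.hasDerivWithinAt (Ioo_subset_Icc_self hx)
      (hg x (Ioo_subset_Icc_self hx))).hasDerivAt (Icc_mem_nhds hx.1 hx.2))
    (hg.intervalIntegrable_of_Icc hab)

lemma integral_id_mul (h : SubgradientOn g F (Icc a b)) (hg : ContinuousOn g (Icc a b))
    (hab : a ≤ b) : ∫ x in a..b, x * g x = b * F b - a * F a - ∫ x in a..b, F x := by
  rw [← uIcc_of_le hab] at h hg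
  simpa only [one_mul] using
    intervalIntegral.integral_mul_deriv_eq_deriv_mul_of_hasDerivWithinAt
      (u := fun x ↦ x) (u' := fun _ ↦ 1) (fun x _ ↦ hasDerivWithinAt_id x _)
      (fun x hx ↦ h.hasDerivWithinAt hx (hg x hx)) intervalIntegrable_const hg.intervalIntegrable

lemma nonpos (h : SubgradientOn g F (Icc a b)) (hab : a < b) (ha : F a = 0) (hb : F b = 0)
    (hx : x ∈ Icc a b) : F x ≤ 0 := by
  have hxa : F x + g x * (a - x) ≤ 0 := ha ▸ h hx (left_mem_Icc.2 hab.le)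
  have hxb : F x + g x * (b - x) ≤ 0 := hb ▸ h hx (right_mem_Icc.2 hab.le)
  -- The combination `(b - x) * hxa + (x - a) * hxb` eliminates the slope `g x`.
  have hcomb : (b - a) * F x ≤ 0 := by
    linarith [mul_le_mul_of_nonneg_left hxa (sub_nonneg.2 hx.2),
      mul_le_mul_of_nonneg_left hxb (sub_nonneg.2 hx.1)]
  exact nonpos_of_mul_nonpos_right hcomb (sub_pos.2 hab)

lemma exists_neg (h : SubgradientOn g F (Icc a b)) (hg : ContinuousOn g (Icc a b)) (hab : a < b)
    (ha : F a = 0) (hb : F b = 0) (hne : ∃ x ∈ Icc a b, g x ≠ 0) : ∃ x ∈ Icc a b, F x < 0 := by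
  by_contra! hnonneg
  have hzero : ∀ x ∈ Icc a b, F x = 0 := fun x hx ↦
    (h.nonpos hab ha hb hx).antisymm (hnonneg x hx)
  obtain ⟨x, hx, hgx⟩ := hne
  have hderiv : HasDerivWithinAt F 0 (Icc a b) x :=
    (hasDerivWithinAt_const x _ 0).congr hzero (hzero x hx)
  exact hgx ((uniqueDiffOn_Icc hab x hx).eq_deriv _ (h.hasDerivWithinAt hx (hg x hx)) hderiv)

lemma integral_neg (h : SubgradientOn g F (Icc a b)) (hg : ContinuousOn g (Icc a b)) (hab : a < b)
    (ha : F a = 0) (hb : F b = 0) (hne : ∃ x ∈ Icc a b, g x ≠ 0) : ∫ x in a..b, F x < 0 := by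
  rw [← neg_pos, ← intervalIntegral.integral_neg]
  obtain ⟨x, hx, hFx⟩ := h.exists_neg hg hab ha hb hne
  exact intervalIntegral.integral_pos hab (h.continuousOn hg).neg
    (fun y hy ↦ neg_nonneg.2 (h.nonpos hab ha hb (Ioc_subset_Icc_self hy))) ⟨x, hx, neg_pos.2 hFx⟩

lemma mul_optimalPath (h : SubgradientOn g F (Icc 0 c)) (hg : ContinuousOn g (Icc 0 c))
    (hc : 0 ≤ c) {t : ℝ} (ht : t ∈ Icc (0 : ℝ) 1) :
    c * optimalPath g c t = F c - F (c * (1 - t)) := by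
  have hsub : Icc (c * (1 - t)) c ⊆ Icc 0 c :=
    Icc_subset_Icc_left (mul_nonneg hc (sub_nonneg.2 ht.2))
  rw [optimalPath, ← smul_eq_mul, smul_integral_comp_mul_one_sub]
  exact (h.mono hsub).integral_eq_sub (hg.mono hsub)
    (mul_le_of_le_one_right hc (sub_le_self 1 ht.1))

lemma sq_mul_integral_optimalPath (h : SubgradientOn g F (Icc 0 c))
    (hg : ContinuousOn g (Icc 0 c)) (hc : 0 ≤ c) :
    c ^ 2 * ∫ t in (0 : ℝ)..1, optimalPath g c t = c * F c - ∫ x in (0 : ℝ)..c, F x := by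
  have hmaps : MapsTo (fun t ↦ c * (1 - t)) (Icc 0 1) (Icc 0 c) := fun t ht ↦
    ⟨mul_nonneg hc (sub_nonneg.2 ht.2), mul_le_of_le_one_right hc (sub_le_self 1 ht.1)⟩
  have hint : IntervalIntegrable (fun t ↦ F (c * (1 - t))) volume 0 1 :=
    ((h.continuousOn hg).comp (by fun_prop) hmaps).intervalIntegrable_of_Icc zero_le_one
  have hpath : EqOn (fun t ↦ c * optimalPath g c t) (fun t ↦ F c - F (c * (1 - t))) (uIcc 0 1) :=
    fun t ht ↦ h.mul_optimalPath hg hc (uIcc_of_le (zero_le_one' ℝ) ▸ ht)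
  calc c ^ 2 * ∫ t in (0 : ℝ)..1, optimalPath g c t
      = c * ∫ t in (0 : ℝ)..1, c * optimalPath g c t := by
        rw [intervalIntegral.integral_const_mul, sq, mul_assoc]
    _ = c * (F c - ∫ t in (0 : ℝ)..1, F (c * (1 - t))) := by
        rw [intervalIntegral.integral_congr hpath,
          intervalIntegral.integral_sub intervalIntegrable_const hint,
          intervalIntegral.integral_const, sub_zero, one_smul]
    _ = c * F c - ∫ x in (0 : ℝ)..c, F x := by
        rw [mul_sub, ← smul_eq_mul c (∫ _ in _.._, _), smul_integral_comp_mul_one_sub, sub_self,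
          mul_zero]

lemma mul_integral_comp_optimalPath_slope (h : SubgradientOn g F (Icc 0 c))
    (hg : ContinuousOn g (Icc 0 c)) (hc : 0 ≤ c)
    (hF : ∀ θ ∈ Icc 0 c, F θ = θ * g θ - I (g θ)) :
    c * ∫ t in (0 : ℝ)..1, I (g (c * (1 - t))) = c * F c - 2 * ∫ x in (0 : ℝ)..c, F x := by
  have hI : EqOn (fun θ ↦ I (g θ)) (fun θ ↦ θ * g θ - F θ) (uIcc 0 c) := fun θ hθ ↦ by
    simp only [hF θ (uIcc_of_le hc ▸ hθ), sub_sub_cancel]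
  have hint : IntervalIntegrable (fun θ ↦ θ * g θ) volume 0 c :=
    (continuousOn_id.mul hg).intervalIntegrable_of_Icc hc
  rw [← smul_eq_mul, smul_integral_comp_mul_one_sub (fun θ ↦ I (g θ)), sub_self, mul_zero,
    intervalIntegral.integral_congr hI, intervalIntegral.integral_sub hint
      ((h.continuousOn hg).intervalIntegrable_of_Icc hc), h.integral_id_mul hg hc]
  ring

end SubgradientOn

theorem rescaled_path_properties_general
    (L : ℝ) (I Ξ : ℝ → ℝ) (S : Set ℝ)
    (hL : 0 < L)
    (hΞcont : ContinuousOn Ξ (Icc 0 L))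
    (hΞmaps : MapsTo Ξ (Icc 0 L) S)
    (hΞmax : ∀ θ ∈ Icc 0 L, IsMaxOn (fun x ↦ θ * x - I x) S (Ξ θ))
    (hΞne : ∃ θ ∈ Icc 0 L, Ξ θ ≠ 0)
    (hIzero : I (Ξ 0) = 0)
    (hIL : I (Ξ L) = L * Ξ L)
    (ψ : ℝ → ℝ)
    (hψ : ∀ t : ℝ, ψ t = ∫ s in (0:ℝ)..t, Ξ (L * (1 - s)))
    (Λ : ℝ → ℝ)
    (hΛ : ∀ θ ∈ Icc (0:ℝ) L, Λ θ = θ * Ξ θ - I (Ξ θ))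
    (K b a : ℝ)
    (hK : K = 2 * √(-∫ θ in (0:ℝ)..L, Λ θ))
    (hb : 0 < b)
    (ha : a = 2 * L * √b / K)
    (ψb : ℝ → ℝ)
    (hψb : ∀ t : ℝ, ψb t = a * ψ (t / a)) :
    ψb a = 0 ∧
    (∫ t in (0:ℝ)..a, ψb t) = b ∧
    (∫ t in (0:ℝ)..a, I (Ξ (L * (1 - t / a)))) = K * √b := by
  have hsub : SubgradientOn Ξ Λ (Icc 0 L) := .of_isMaxOn hΞmaps hΞmax hΛ
  have hΛzero : Λ 0 = 0 := by rw [hΛ 0 (left_mem_Icc.2 hL.le), hIzero, zero_mul, sub_zero]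
  have hΛL : Λ L = 0 := by rw [hΛ L (right_mem_Icc.2 hL.le), hIL, sub_self]
  obtain rfl : ψ = optimalPath Ξ L := funext hψ
  set J := -∫ θ in (0:ℝ)..L, Λ θ with hJ
  have hJpos : 0 < J := neg_pos.2 (hsub.integral_neg hΞcont hL hΛzero hΛL hΞne)
  have hend : optimalPath Ξ L 1 = 0 := by
    have hΛend := hsub.mul_optimalPath hΞcont hL.le (right_mem_Icc.2 zero_le_one)
    rw [sub_self, mul_zero, hΛL, hΛzero, sub_self] at hΛend
    exact (mul_eq_zero.1 hΛend).resolve_left hL.ne'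
  have harea : ∫ t in (0:ℝ)..1, optimalPath Ξ L t = J / L ^ 2 := by
    rw [eq_div_iff (pow_ne_zero 2 hL.ne'), mul_comm, hsub.sq_mul_integral_optimalPath hΞcont hL.le,
      hΛL, mul_zero, zero_sub]
  have hcost : ∫ t in (0:ℝ)..1, I (Ξ (L * (1 - t))) = 2 * J / L := by
    rw [eq_div_iff hL.ne', mul_comm, hsub.mul_integral_comp_optimalPath_slope hΞcont hL.le hΛ, hΛL,
      hJ, mul_zero, zero_sub, mul_neg]
  have ha' : a = L * √b / √J := by rw [ha, hK, mul_assoc, mul_div_mul_left _ _ two_ne_zero]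
  refine ⟨?_, ?_, ?_⟩
  · have ha0 : a ≠ 0 := by rw [ha']; positivity
    rw [hψb, div_self ha0, hend, mul_zero]
  · calc ∫ t in (0:ℝ)..a, ψb t
        = a ^ 2 * (J / L ^ 2) := by
          simp only [hψb, ← smul_eq_mul, integral_smul_comp_div_self, harea]
      _ = b := by
          rw [ha', div_pow, mul_pow, Real.sq_sqrt hb.le, Real.sq_sqrt hJpos.le]
          field_simp
  · calc ∫ t in (0:ℝ)..a, I (Ξ (L * (1 - t / a)))
        = a * (2 * J / L) := by
          rw [integral_comp_div_self (fun t ↦ I (Ξ (L * (1 - t)))), hcost, smul_eq_mul]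
      _ = 2 * (J / √J) * √b := by
          rw [ha']
          field_simp
      _ = K * √b := by rw [Real.div_sqrt, hK]

/-- For the rescaled path `ψ*_b(t) = a ψ*(t/a)` with `a = 2 λ* √b / K`:
it returns to zero at `a`, sweeps area exactly `b`, and its large-deviations cost is
`K √b`. -/
theorem rescaled_path_properties
    (δ xstar lstar : ℝ) (I Ξ : ℝ → ℝ)
    (hδ : 0 < δ)
    (hconv : StrictConvexOn ℝ Set.univ I)
    (hC1 : ContDiff ℝ 1 I)
    (hImin : I (-δ) = 0)
    (hIpos : ∀ x : ℝ, x ≠ -δ → 0 < I x)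
    (hderivδ : deriv I (-δ) = 0)
    (hxpos : 0 < xstar)
    (hxmin : ∀ x : ℝ, 0 < x → I xstar / xstar ≤ I x / x)
    (hlamdef : lstar = deriv I xstar)
    (hlamalt : lstar = I xstar / xstar)
    (hlampos : 0 < lstar)
    (hΞinvL : ∀ x ∈ Set.Icc (-δ) xstar, Ξ (deriv I x) = x)
    (hΞinvR : ∀ r ∈ Set.Icc (0:ℝ) lstar, deriv I (Ξ r) = r)
    (hΞmaps : ∀ r ∈ Set.Icc (0:ℝ) lstar, Ξ r ∈ Set.Icc (-δ) xstar)
    (hΞcont : ContinuousOn Ξ (Set.Icc 0 lstar))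
    (hΞmono : StrictMonoOn Ξ (Set.Icc 0 lstar))
    (hΞzero : Ξ 0 = -δ)
    (hΞlstar : Ξ lstar = xstar)
    (ψ : ℝ → ℝ)
    (hψ : ∀ t : ℝ, ψ t = ∫ s in (0:ℝ)..t, Ξ (lstar * (1 - s)))
    (Λ : ℝ → ℝ)
    (hΛ : ∀ θ ∈ Set.Icc (0:ℝ) lstar, Λ θ = θ * Ξ θ - I (Ξ θ))
    (K b a : ℝ)
    (hK : K = 2 * Real.sqrt (-∫ θ in (0:ℝ)..lstar, Λ θ))
    (hb : 0 < b)
    (ha : a = 2 * lstar * Real.sqrt b / K)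
    (ψb : ℝ → ℝ)
    (hψb : ∀ t : ℝ, ψb t = a * ψ (t / a)) :
    ψb a = 0 ∧
    (∫ t in (0:ℝ)..a, ψb t) = b ∧
    (∫ t in (0:ℝ)..a, I (Ξ (lstar * (1 - t / a)))) = K * Real.sqrt b := by
  have hderiv : ∀ θ ∈ Icc 0 lstar, HasDerivAt I θ (Ξ θ) := fun θ hθ ↦ by
    simpa only [hΞinvR θ hθ] using (hC1.differentiable one_ne_zero (Ξ θ)).hasDerivAt
  exact rescaled_path_properties_general lstar I Ξ univ hlampos hΞcont (mapsTo_univ _ _)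
    (fun θ hθ ↦ isMaxOn_mul_sub_of_hasDerivWithinAt hconv.convexOn (mem_univ _)
      (hderiv θ hθ).hasDerivWithinAt)
    ⟨0, left_mem_Icc.2 hlampos.le, by rw [hΞzero]; exact neg_ne_zero.2 hδ.ne'⟩
    (by rw [hΞzero, hImin]) (by rw [hΞlstar, hlamalt, div_mul_cancel₀ _ hxpos.ne'])
    ψ hψ Λ hΛ K b a hK hb ha ψb hψb
end

section
/- Let 0 < α < β < 1 and define Λ(θ) = log(((1−α)e^{−θ} + (1−β)e^{θ} + √(4αβ + ((1−α)e^{−θ} − (1−β)e^{θ})²))/2) for θ ∈ ℝ. Set λ* = log((1−α)/(1−β)). Then λ* > 0, Λ(λ*) = 0, sup{θ ∈ ℝ : Λ(θ) ≤ 0} = λ*, and the symmetry Λ(θ) = Λ(λ* − θ) holds for all θ ∈ ℝ. -/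
open MeasureTheory Set Filter

/-!
Tilting the transition matrix by `θ` multiplies its diagonal entries `1 - α` and `1 - β` by
`exp (-θ)` and `exp θ`, while the product `α * β` of its off-diagonal entries does not change, and
`Λ θ` is the logarithm of the Perron root of the tilted matrix. The reflection `θ ↦ λ* - θ` swaps
the two tilted diagonal entries, on which the Perron root depends symmetrically; so `Λ` is
symmetric, and `Λ λ* = Λ 0 = 0` because the untilted matrix is stochastic. The product of the tilted
diagonal entries does not change either, so the Perron root is at most `1` exactly when the trace
does not exceed its value at `θ = 0`. The difference of the traces factors as
`exp (-θ) * (exp θ - 1) * ((1 - β) * exp θ - (1 - α))`, whence `Λ θ ≤ 0` exactly on `[0, λ*]`.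
-/

/-- The Perron root of a nonnegative `2 × 2` matrix, that is, the larger root of its characteristic
polynomial `(x - p) * (x - q) - c`, in terms of the diagonal entries `p`, `q` and the product `c` of
the off-diagonal entries. -/
noncomputable def perronRoot (p q c : ℝ) : ℝ :=
  (p + q + √(4 * c + (p - q) ^ 2)) / 2

theorem perronRoot_comm (p q c : ℝ) : perronRoot p q c = perronRoot q p c := by
  rw [perronRoot, perronRoot, add_comm p q, sub_sq_comm]

theorem perronRoot_nonneg {p q : ℝ} (hpq : 0 ≤ p + q) (c : ℝ) : 0 ≤ perronRoot p q c := by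
  unfold perronRoot
  positivity

theorem perronRoot_le_iff {p q c x : ℝ} :
    perronRoot p q c ≤ x ↔ p + q ≤ 2 * x ∧ c ≤ (x - p) * (x - q) := by
  have sqrt_le : perronRoot p q c ≤ x ↔ √(4 * c + (p - q) ^ 2) ≤ 2 * x - (p + q) := by
    rw [perronRoot, div_le_iff₀ two_pos, mul_comm x, le_sub_iff_add_le']
  have discr_sub : (2 * x - (p + q)) ^ 2 - (4 * c + (p - q) ^ 2) = 4 * ((x - p) * (x - q) - c) := by
    ring
  rw [sqrt_le, Real.sqrt_le_iff, sub_nonneg, ← sub_nonneg (b := 4 * c + _), discr_sub,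
    mul_nonneg_iff_of_pos_left four_pos, sub_nonneg]

theorem perronRoot_stochastic {α β : ℝ} (h : 0 ≤ α + β) :
    perronRoot (1 - α) (1 - β) (α * β) = 1 := by
  have discr_eq : 4 * (α * β) + ((1 - α) - (1 - β)) ^ 2 = (α + β) ^ 2 := by ring
  rw [perronRoot, discr_eq, Real.sqrt_sq h]
  ring

theorem mul_exp_log_div_sub {a b : ℝ} (ha : 0 < a) (hb : 0 < b) (θ : ℝ) :
    b * Real.exp (Real.log (a / b) - θ) = a * Real.exp (-θ) := by
  rw [sub_eq_add_neg, Real.exp_add, Real.exp_log (div_pos ha hb), ← mul_assoc,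
    mul_div_cancel₀ a hb.ne']

theorem mul_exp_neg_mul_mul_exp (a b θ : ℝ) :
    a * Real.exp (-θ) * (b * Real.exp θ) = a * b := by
  rw [mul_mul_mul_comm, ← Real.exp_add, neg_add_cancel, Real.exp_zero, mul_one]

theorem mul_exp_neg_add_mul_exp_le_add_iff {a b θ : ℝ} (hb : 0 < b) (hba : b ≤ a) :
    a * Real.exp (-θ) + b * Real.exp θ ≤ a + b ↔ θ ∈ Icc 0 (Real.log (a / b)) := by
  have ha : 0 < a := hb.trans_le hba
  have factorization : a * Real.exp (-θ) + b * Real.exp θ - (a + b) =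
      b * Real.exp (-θ) * ((Real.exp θ - 1) * (Real.exp θ - a / b)) := by
    rw [Real.exp_neg]
    field_simp
    ring
  have factor_pos : 0 < b * Real.exp (-θ) := by positivity
  rw [← sub_nonpos, factorization, ← smul_eq_mul (b * _),
    smul_nonpos_iff_nonpos_of_pos_left factor_pos,
    sub_mul_sub_nonpos_iff _ ((one_le_div hb).mpr hba),
    Real.one_le_exp_iff, mem_Icc, Real.le_log_iff_exp_le (div_pos ha hb)]

/-- The scaled cumulant generating function of the random walk whose increments form the Markov
chain on `{-1, 1}` with transition probabilities `α` from `-1` to `1` and `β` from `1` to `-1`: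
the logarithm of the Perron root of the transition matrix tilted by `θ`. -/
noncomputable def markovCGF (α β θ : ℝ) : ℝ :=
  Real.log (perronRoot ((1 - α) * Real.exp (-θ)) ((1 - β) * Real.exp θ) (α * β))

theorem markovCGF_log_sub {α β : ℝ} (hα : α < 1) (hβ : β < 1) (θ : ℝ) :
    markovCGF α β (Real.log ((1 - α) / (1 - β)) - θ) = markovCGF α β θ := by
  have ha : 0 < 1 - α := sub_pos.mpr hα
  have hb : 0 < 1 - β := sub_pos.mpr hβ
  have reflected_left : (1 - α) * Real.exp (-(Real.log ((1 - α) / (1 - β)) - θ)) =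
      (1 - β) * Real.exp θ := by
    simpa [← Real.log_inv, add_comm, sub_eq_add_neg] using mul_exp_log_div_sub hb ha (-θ)
  rw [markovCGF, reflected_left, mul_exp_log_div_sub ha hb, perronRoot_comm, markovCGF]

theorem markovCGF_zero {α β : ℝ} (h : 0 ≤ α + β) : markovCGF α β 0 = 0 := by
  rw [markovCGF, neg_zero, Real.exp_zero, mul_one, mul_one, perronRoot_stochastic h, Real.log_one]

theorem markovCGF_nonpos_iff {α β θ : ℝ} (h : 0 ≤ α + β) (hαβ : α ≤ β) (hβ : β < 1) :
    markovCGF α β θ ≤ 0 ↔ θ ∈ Icc 0 (Real.log ((1 - α) / (1 - β))) := by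
  have hb : 0 < 1 - β := sub_pos.mpr hβ
  have ha : 0 < 1 - α := by linarith
  rw [markovCGF, Real.log_nonpos_iff (perronRoot_nonneg (by positivity) _), perronRoot_le_iff,
    ← mul_exp_neg_add_mul_exp_le_add_iff hb (sub_le_sub_left hαβ 1)]
  have det_eq := mul_exp_neg_mul_mul_exp (1 - α) (1 - β) θ
  constructor
  · rintro ⟨-, charpoly_nonneg⟩
    linarith
  · intro trace_le
    constructor <;> linarith

/-- Markov `{−1, +1}` increments: with `λ* = log((1−α)/(1−β))` one has `λ* > 0`,
`Λ(λ*) = 0`, `sup {θ : Λ(θ) ≤ 0} = λ*`, and the symmetry `Λ(θ) = Λ(λ* − θ)`. -/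
theorem markov_symmetry
    (α β : ℝ) (hα : 0 < α) (hαβ : α < β) (hβ1 : β < 1)
    (Λ : ℝ → ℝ)
    (hΛ : ∀ θ : ℝ, Λ θ = Real.log ((((1 - α) * Real.exp (-θ) + (1 - β) * Real.exp θ) +
      Real.sqrt (4 * α * β +
        ((1 - α) * Real.exp (-θ) - (1 - β) * Real.exp θ) ^ 2)) / 2))
    (lstar : ℝ) (hlam : lstar = Real.log ((1 - α) / (1 - β))) :
    0 < lstar ∧
    Λ lstar = 0 ∧
    sSup {θ : ℝ | Λ θ ≤ 0} = lstar ∧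
    (∀ θ : ℝ, Λ θ = Λ (lstar - θ)) := by
  obtain rfl : Λ = markovCGF α β := by
    funext θ
    rw [hΛ, markovCGF, perronRoot, mul_assoc]
  have hsum : 0 ≤ α + β := by linarith
  have lstar_pos : 0 < lstar := by
    rw [hlam]
    exact Real.log_pos ((one_lt_div (sub_pos.mpr hβ1)).mpr (sub_lt_sub_left hαβ 1))
  have symmetry (θ : ℝ) : markovCGF α β (lstar - θ) = markovCGF α β θ := by
    rw [hlam, markovCGF_log_sub (hαβ.trans hβ1) hβ1]
  have sublevel_eq : {θ : ℝ | markovCGF α β θ ≤ 0} = Icc 0 lstar := by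
    rw [hlam]
    exact Set.ext fun θ ↦ markovCGF_nonpos_iff hsum hαβ.le hβ1
  refine ⟨lstar_pos, ?_, ?_, fun θ ↦ (symmetry θ).symm⟩
  · rw [← symmetry, sub_self, markovCGF_zero hsum]
  · rw [sublevel_eq, csSup_Icc lstar_pos.le]
end
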